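/- Let Î : M₁(E) → [0,∞] be defined by Î(μ) := sup_{φ∈C(E)} { −∫∫ μ(dx)c(x,dy) [e^{φ(y)−φ(x)} − 1] }. As T → ∞ the family {P_x ∘ μ_T^{-1}}_{T>0} satisfies, uniformly with respect to x bounded away from E₀, a large deviation principle with convex rate function Î. -/

import Mathlib

open MeasureTheory ProbabilityTheory Filter Topology Set ENNReal

noncomputable section

/-- The data of transition rates `c(x,dy) = r(x) p(x,y) λ(dy)` on a state space `E`,
satisfying Assumption 1.1 (i)-(iii): `r` is continuous and nonnegative, `λ` is a probability
measure which is strictly positive on open sets, `p` is a strictly positive continuous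
transition density, and `1/r` is `λ`-integrable. -/
structure ChainSetting (E : Type*) [MeasurableSpace E] [TopologicalSpace E] where
  r : E → ℝ
  r_cont : Continuous r
  r_nonneg : ∀ x, 0 ≤ r x
  lam : Measure E
  lam_prob : IsProbabilityMeasure lam
  lam_pos : ∀ U : Set E, IsOpen U → U.Nonempty → 0 < lam U
  p : E → E → ℝ
  p_cont : Continuous fun z : E × E => p z.1 z.2
  p_pos : ∀ x y, 0 < p x y
  p_int : ∀ x, ∫ y, p x y ∂lam = 1
  inv_r_int : ∫⁻ x, (ENNReal.ofReal (r x))⁻¹ ∂lam ≠ ∞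

namespace ChainSetting

variable {E : Type*} [MeasurableSpace E] [TopologicalSpace E] (S : ChainSetting E)

/-- The (closed) set `E₀ = {x : r(x) = 0}` of absorbing states. -/
def E0 : Set E := {x | S.r x = 0}

/-- The skeleton transition probability `p(x,dy) = p(x,y) λ(dy)`. -/
def skel (x : E) : Measure E := S.lam.withDensity fun y => ENNReal.ofReal (S.p x y)

/-- The jump rates `c(x,dy) = r(x) p(x,y) λ(dy)`. -/
def cMeas (x : E) : Measure E := S.lam.withDensity fun y => ENNReal.ofReal (S.r x * S.p x y)

/-- The measure `μ(dx) c(x,dy)` on `E × E`. -/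
def muc (μ : Measure E) : Measure (E × E) :=
  (μ.prod S.lam).withDensity fun z => ENNReal.ofReal (S.r z.1 * S.p z.1 z.2)

/-- The invariant probability `π(dx) = π₀(1/r)⁻¹ π₀(dx)/r(x)` of the continuous-time chain,
built from the invariant probability `π₀` of the skeleton, cf. (1.2). -/
def piMeas (π₀ : Measure E) : Measure E :=
  (∫⁻ x, (ENNReal.ofReal (S.r x))⁻¹ ∂π₀)⁻¹ •
    π₀.withDensity fun x => (ENNReal.ofReal (S.r x))⁻¹

/-- Assumption 1.1 (iv): with `A_δ = {r < δ}`, there is a sequence `δ_n → 0` with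
`λ(A_{2δ_n}) ≤ C λ(A_{2δ_n} \ A_{δ_n})`. -/
def CondIV : Prop :=
  ∃ δ : ℕ → ℝ, (∀ n, 0 < δ n) ∧ Tendsto δ atTop (𝓝 0) ∧
    ∃ C : ℝ≥0∞, C ≠ ∞ ∧ ∀ n,
      S.lam {x | S.r x < 2 * δ n} ≤ C * S.lam ({x | S.r x < 2 * δ n} \ {x | S.r x < δ n})

end ChainSetting

/-- Trajectories of the jump process: the skeleton chain `ω.1` together with the holding
times `ω.2` (with value `∞` allowed, corresponding to absorption). -/
abbrev Traj (E : Type*) := (ℕ → E) × (ℕ → ℝ≥0∞)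

namespace Traj

variable {E : Type*}

/-- The jump times `T_n = τ_0 + ⋯ + τ_{n-1}`. -/
def jumpTime (n : ℕ) (ω : Traj E) : ℝ≥0∞ := ∑ i ∈ Finset.range n, ω.2 i

/-- The position at time `t`: `X_t = Z_n` for `T_n ≤ t < T_{n+1}`. -/
def pos (t : ℝ) (ω : Traj E) : E := ω.1 (sInf {n | ENNReal.ofReal t < jumpTime (n + 1) ω})

end Traj

/-- The exponential law of parameter `ρ`, as a measure on `ℝ≥0∞`; for `ρ ≤ 0` it is the Dirac
mass at `∞` (infinite holding time at an absorbing state). -/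
def expMeasE (ρ : ℝ) : Measure ℝ≥0∞ :=
  if 0 < ρ then
    Measure.map ENNReal.ofReal
      (MeasureTheory.volume.withDensity fun s =>
        Set.indicator (Set.Ioi (0 : ℝ)) (fun s => ENNReal.ofReal (ρ * Real.exp (-(ρ * s)))) s)
  else Measure.dirac ∞

/-- `P` is the law of the continuous-time Markov chain with holding rates `ρ` and skeleton
transition kernel `κ`, started at `x`: the skeleton `ω.1` is a Markov chain with kernel `κ`
started at `x`, and conditionally on the skeleton the holding times `ω.2 i` are independent
exponential random variables of parameters `ρ(Z_i)`. -/
structure IsChainLaw {E : Type*} [MeasurableSpace E]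
    (ρ : E → ℝ) (κ : E → Measure E) (x : E) (P : Measure (Traj E)) : Prop where
  prob : IsProbabilityMeasure P
  init : P.map (fun ω => ω.1 0) = Measure.dirac x
  markov : ∀ (n : ℕ) (f : (Fin (n + 1) → E) → ℝ≥0∞) (g : E → ℝ≥0∞),
    Measurable f → Measurable g →
    ∫⁻ ω, f (fun i => ω.1 i) * g (ω.1 (n + 1)) ∂P
      = ∫⁻ ω, f (fun i => ω.1 i) * ∫⁻ y, g y ∂κ (ω.1 n) ∂P
  holding : ∀ (n : ℕ) (f : (ℕ → E) → ℝ≥0∞) (g : Fin n → ℝ≥0∞ → ℝ≥0∞),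
    Measurable f → (∀ i, Measurable (g i)) →
    ∫⁻ ω, f ω.1 * ∏ i : Fin n, g i (ω.2 i) ∂P
      = ∫⁻ ω, f ω.1 * ∏ i : Fin n, ∫⁻ s, g i s ∂expMeasE (ρ (ω.1 i)) ∂P

/-- The empirical measure `μ_T` of (2.2), as a measure on `E`. -/
def empMeas {E : Type*} [MeasurableSpace E] (T : ℝ) (ω : Traj E) : Measure E :=
  (ENNReal.ofReal T)⁻¹ •
    Measure.map (fun t => Traj.pos t ω) (MeasureTheory.volume.restrict (Set.Ioc 0 T))

open Classical in
/-- The empirical flow `Q_T`, as a measure on `E × E`: `(1/T)` times the sum of the Dirac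
masses at the jumps `(X_{t⁻}, X_t)` occurring at times `t ∈ [0,T]`. -/
def empFlow {E : Type*} [MeasurableSpace E] (T : ℝ) (ω : Traj E) : Measure (E × E) :=
  (ENNReal.ofReal T)⁻¹ • Measure.sum fun n : ℕ =>
    if Traj.jumpTime (n + 1) ω ≤ ENNReal.ofReal T ∧ ω.1 n ≠ ω.1 (n + 1)
    then Measure.dirac (ω.1 n, ω.1 (n + 1)) else 0

open Classical in
/-- Bundle a measure as a probability measure (junk value if it is not one). -/
def toPM {α : Type*} [MeasurableSpace α] [Nonempty α] (μ : Measure α) : ProbabilityMeasure α :=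
  if h : IsProbabilityMeasure μ then ⟨μ, h⟩
  else ⟨Measure.dirac (Classical.arbitrary α), by infer_instance⟩

open Classical in
/-- Bundle a measure as a finite measure (junk value if it is not one). -/
def toFM {α : Type*} [MeasurableSpace α] (μ : Measure α) : FiniteMeasure α :=
  if h : IsFiniteMeasure μ then ⟨μ, h⟩ else 0

/-- The pair empirical measure–empirical flow `(μ_T, Q_T)`, as a random element of
`M₁(E) × M₊(E×E)`. -/
def empPair {E : Type*} [MeasurableSpace E] [Nonempty E] (T : ℝ) (ω : Traj E) :
    ProbabilityMeasure E × FiniteMeasure (E × E) :=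
  (toPM (empMeas T ω), toFM (empFlow T ω))

/-- The convex function `Ψ(a) = a log a - (a - 1)` (with `Ψ(0) = 1`), extended to `ℝ≥0∞`. -/
def PsiE (a : ℝ≥0∞) : ℝ≥0∞ :=
  if a = ∞ then ∞ else ENNReal.ofReal (a.toReal * Real.log a.toReal - a.toReal + 1)

open Classical in
/-- The joint rate functional `I(μ,Q)` of (2.3):
`I(μ,Q) = ∫∫ μ(dx)c(x,dy) Ψ(dQ/(μ(dx)c(x,dy)))` if the two marginals of `Q` coincide and
`Q ≪ μ(dx)c(x,dy)`, and `+∞` otherwise. -/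
def ChainSetting.rateI0 {E : Type*} [MeasurableSpace E] [TopologicalSpace E]
    (S : ChainSetting E) (μ : Measure E) (Q : Measure (E × E)) : ℝ≥0∞ :=
  if Q.fst = Q.snd ∧ Q ≪ S.muc μ
  then ∫⁻ z, PsiE (Q.rnDeriv (S.muc μ) z) ∂(S.muc μ)
  else ∞

/-- The joint rate functional `I` on `M₁(E) × M₊(E×E)`. -/
def ChainSetting.rateI {E : Type*} [MeasurableSpace E] [TopologicalSpace E]
    (S : ChainSetting E) (q : ProbabilityMeasure E × FiniteMeasure (E × E)) : ℝ≥0∞ :=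
  S.rateI0 (q.1 : Measure E) (q.2 : Measure (E × E))

/-- The Donsker-Varadhan functional
`Î(μ) = sup_{φ ∈ C(E)} { -∫∫ μ(dx)c(x,dy) [e^{φ(y)-φ(x)} - 1] }`. -/
def ChainSetting.Ihat0 {E : Type*} [MeasurableSpace E] [TopologicalSpace E]
    (S : ChainSetting E) (μ : Measure E) : ℝ≥0∞ :=
  ⨆ φ : C(E, ℝ), ENNReal.ofReal (-∫ z : E × E, (Real.exp (φ z.2 - φ z.1) - 1) ∂S.muc μ)

variable {E : Type*} [MeasurableSpace E] [TopologicalSpace E] [PolishSpace E]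
  [CompactSpace E] [BorelSpace E] [Nonempty E]


/-!
Write `Î(μ) = sup_φ ∫ V_φ dμ` with `V_φ = -e^{-φ} L e^φ`, where `L` is the generator.

Upper bound: `exp(φ(X_T) + ∫₀^T V_φ(X_s) ds)` is a martingale, so Chebyshev's inequality gives
`P_x(∫ V_φ dμ_T > a) ≤ e^{2‖φ‖ - aT}`, and a closed set of probability measures on which `Î > a` is
covered by finitely many sets `{∫ V_φ dν > a}`.

Lower bound: weak neighbourhoods are determined by the integral of a vector-valued `F`, whose first
coordinate is taken to be `1`, so that the additive functional `∑ τ_i F(Z_i)` also records time. As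
`p ≥ c > 0`, the laws of this functional, started from `λ` and multiplied by `c`, are
supermultiplicative for convolution, so the pairs (value, exponential cost) they reach generate a
convex cone up to closure. If this cone missed `(∫ F dμ, h)` for some `h > Î(μ)`, a separating
hyperplane would give a linear form `ℓ` with `ℓ(∫ F dμ) > h` such that, for every `ε > 0`,
`E_λ e^{∑ τ_i (ℓ(F(Z_i)) - ε)}` is bounded in the number of jumps; the iterates of the associated
Feynman–Kac operator then yield a `φ` with `V_φ` close to `ℓ ∘ F`, hence `Î(μ) ≥ h`, a
contradiction.
-/

section Trajectories

namespace Traj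

variable {E : Type*}

lemma jumpTime_succ (n : ℕ) (ω : Traj E) : jumpTime (n + 1) ω = jumpTime n ω + ω.2 n :=
  Finset.sum_range_succ _ n

lemma monotone_jumpTime (ω : Traj E) : Monotone fun n => jumpTime n ω :=
  monotone_nat_of_le_succ fun n => by simp [jumpTime_succ]

lemma pos_eq_of_mem_Ico {n : ℕ} {t : ℝ} {ω : Traj E}
    (h : ENNReal.ofReal t ∈ Ico (jumpTime n ω) (jumpTime (n + 1) ω)) : pos t ω = ω.1 n := by
  refine congrArg ω.1 (le_antisymm (Nat.sInf_le h.2) (le_csInf ⟨n, h.2⟩ fun m hm => ?_))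
  by_contra! hlt
  exact (hm.trans_le (monotone_jumpTime ω hlt)).not_ge h.1

lemma integral_pos_of_le_jumpTime_succ {V : Type*} [NormedAddCommGroup V] [NormedSpace ℝ V]
    [CompleteSpace V] (f : E → V) {ω : Traj E} {n : ℕ} {T : ℝ}
    (hn : jumpTime n ω ≠ ∞) (hnT : (jumpTime n ω).toReal ≤ T)
    (hTn : ENNReal.ofReal T ≤ jumpTime (n + 1) ω) :
    ∫ t in (jumpTime n ω).toReal..T, f (pos t ω)
      = (T - (jumpTime n ω).toReal) • f (ω.1 n) := by
  have hconst : EqOn (fun t => f (pos t ω)) (fun _ => f (ω.1 n))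
      (Ioo (jumpTime n ω).toReal T) := fun t ht => by
    have h0 : 0 < T := ENNReal.toReal_nonneg.trans_lt (ht.1.trans ht.2)
    refine congrArg f (pos_eq_of_mem_Ico ⟨?_, ?_⟩)
    · exact ENNReal.le_ofReal_iff_toReal_le hn (ENNReal.toReal_nonneg.trans ht.1.le) |>.2 ht.1.le
    · exact ((ENNReal.ofReal_lt_ofReal_iff h0).2 ht.2).trans_le hTn
  rw [intervalIntegral.integral_of_le hnT, integral_Ioc_eq_integral_Ioo,
    setIntegral_congr_fun measurableSet_Ioo hconst]
  simp [Measure.real, hnT]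

/-- The additive functional `∑_{i < n} τ_i F(Z_i)` of the trajectory at its `n`-th jump, that is
`∫₀^{T_n} F(X_t) dt`. Infinite holding times contribute the junk value `0`. -/
def additive {V : Type*} [AddCommMonoid V] [Module ℝ V] (F : E → V) (n : ℕ) (ω : Traj E) : V :=
  ∑ i ∈ Finset.range n, (ω.2 i).toReal • F (ω.1 i)

section Additive

variable {V W : Type*} [AddCommMonoid V] [Module ℝ V] [AddCommMonoid W] [Module ℝ W]

@[simp]
lemma additive_zero (F : E → V) (ω : Traj E) : additive F 0 ω = 0 := Finset.sum_range_zero _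

lemma additive_succ (F : E → V) (n : ℕ) (ω : Traj E) :
    additive F (n + 1) ω = additive F n ω + (ω.2 n).toReal • F (ω.1 n) :=
  Finset.sum_range_succ _ n

lemma map_additive (L : V →ₗ[ℝ] W) (F : E → V) (n : ℕ) (ω : Traj E) :
    L (additive F n ω) = additive (fun x => L (F x)) n ω := by
  simp [additive]

lemma additive_prodMk (F : E → V) (G : E → W) (n : ℕ) (ω : Traj E) :
    additive (fun x => (F x, G x)) n ω = (additive F n ω, additive G n ω) :=
  Prod.ext (map_additive (LinearMap.fst ℝ V W) _ n ω) (map_additive (LinearMap.snd ℝ V W) _ n ω)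

lemma additive_one_nonneg (n : ℕ) (ω : Traj E) : 0 ≤ additive (fun _ => (1 : ℝ)) n ω :=
  Finset.sum_nonneg fun _ _ => by positivity

lemma jumpTime_eq_ofReal_additive {ω : Traj E} (hω : ∀ i, ω.2 i ≠ ∞) (n : ℕ) :
    jumpTime n ω = ENNReal.ofReal (additive (fun _ => (1 : ℝ)) n ω) := by
  simp only [jumpTime, additive, smul_eq_mul, mul_one]
  rw [ENNReal.ofReal_sum_of_nonneg fun _ _ => ENNReal.toReal_nonneg]
  exact Finset.sum_congr rfl fun i _ => (ENNReal.ofReal_toReal (hω i)).symm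

end Additive

end Traj

lemma measurable_sInf_nat {α : Type*} [MeasurableSpace α] {s : ℕ → Set α}
    (hs : ∀ n, MeasurableSet (s n)) : Measurable fun a => sInf {n | a ∈ s n} := by
  refine measurable_of_Iic fun k => ?_
  have hpre : (fun a => sInf {n | a ∈ s n}) ⁻¹' Iic k = (⋃ m ∈ Iic k, s m) ∪ (⋃ m, s m)ᶜ := by
    ext a
    simp only [mem_preimage, mem_Iic, mem_union, mem_iUnion, mem_compl_iff, not_exists,
      exists_prop]
    constructor
    · intro h
      by_cases ha : ∃ m, a ∈ s m
      · exact Or.inl ⟨_, h, Nat.sInf_mem (s := {n | a ∈ s n}) ha⟩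
      · exact Or.inr (not_exists.1 ha)
    · rintro (⟨m, hm, ha⟩ | h)
      · exact (Nat.sInf_le (s := {n | a ∈ s n}) ha).trans hm
      · simp [h]
  rw [hpre]
  exact (MeasurableSet.biUnion (to_countable _) fun m _ => hs m).union (.compl (.iUnion hs))

namespace Traj

variable {E : Type*} [MeasurableSpace E]

lemma measurable_pos (ω : Traj E) : Measurable fun t => pos t ω :=
  (measurable_from_nat (f := ω.1)).comp <|
    measurable_sInf_nat fun _ => measurableSet_lt ENNReal.measurable_ofReal measurable_const

lemma measurable_additive {V : Type*} [NormedAddCommGroup V] [NormedSpace ℝ V] [MeasurableSpace V]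
    [BorelSpace V] [SecondCountableTopology V] {F : E → V} (hF : Measurable F) (n : ℕ) :
    Measurable fun ω : Traj E => additive F n ω :=
  Finset.measurable_sum _ fun i _ => by fun_prop

lemma isProbabilityMeasure_empMeas {T : ℝ} (hT : 0 < T) (ω : Traj E) :
    IsProbabilityMeasure (empMeas T ω) where
  measure_univ := by
    rw [empMeas, Measure.smul_apply, Measure.map_apply (measurable_pos ω) .univ]
    simpa using ENNReal.inv_mul_cancel (by simpa using hT) ENNReal.ofReal_ne_top

lemma coe_toPM_empMeas [Nonempty E] {T : ℝ} (hT : 0 < T) (ω : Traj E) :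
    (toPM (empMeas T ω) : Measure E) = empMeas T ω :=
  congrArg ProbabilityMeasure.toMeasure (dif_pos (isProbabilityMeasure_empMeas hT ω))

variable [TopologicalSpace E] [OpensMeasurableSpace E] {V : Type*} [NormedAddCommGroup V]
  [SecondCountableTopology V]

lemma intervalIntegrable_pos [CompactSpace E] (f : C(E, V)) (ω : Traj E)
    (a b : ℝ) : IntervalIntegrable (fun t => f (pos t ω)) volume a b :=
  intervalIntegrable_iff.2 <| Measure.integrableOn_of_bounded (M := ‖f‖) (by simp)
    (f.continuous.stronglyMeasurable.comp_measurable (measurable_pos ω)).aestronglyMeasurable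
    (ae_of_all _ fun _ => f.norm_coe_le_norm _)

variable [NormedSpace ℝ V]

lemma integral_toPM_empMeas [Nonempty E] {T : ℝ} (hT : 0 < T) (ω : Traj E) (f : C(E, V)) :
    ∫ x, f x ∂(toPM (empMeas T ω) : Measure E) = T⁻¹ • ∫ t in 0..T, f (pos t ω) := by
  rw [coe_toPM_empMeas hT, empMeas, integral_smul_measure, intervalIntegral.integral_of_le hT.le,
    integral_map (measurable_pos ω).aemeasurable f.continuous.aestronglyMeasurable]
  simp [ENNReal.toReal_inv, ENNReal.toReal_ofReal hT.le]

variable [CompactSpace E] [CompleteSpace V]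

lemma integral_pos_jumpTime (f : C(E, V)) {ω : Traj E} {n : ℕ} (hn : jumpTime n ω ≠ ∞) :
    ∫ t in 0..(jumpTime n ω).toReal, f (pos t ω) = additive f n ω := by
  induction n with
  | zero => simp [jumpTime]
  | succ n ih =>
    obtain ⟨hTn, hτ⟩ := ENNReal.add_ne_top.1 (jumpTime_succ n ω ▸ hn)
    have hadd : (jumpTime (n + 1) ω).toReal = (jumpTime n ω).toReal + (ω.2 n).toReal := by
      rw [jumpTime_succ, ENNReal.toReal_add hTn hτ]
    rw [← intervalIntegral.integral_add_adjacent_intervals (intervalIntegrable_pos f ω _ _)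
      (intervalIntegrable_pos f ω (jumpTime n ω).toReal _), ih hTn, additive_succ,
      integral_pos_of_le_jumpTime_succ f hTn (by rw [hadd]; simp) (ENNReal.ofReal_toReal hn).le,
      hadd, add_sub_cancel_left]

lemma integral_pos (f : C(E, V)) {ω : Traj E} {n : ℕ} {T : ℝ} (hT : 0 ≤ T)
    (hnT : jumpTime n ω ≤ ENNReal.ofReal T) (hTn : ENNReal.ofReal T < jumpTime (n + 1) ω) :
    ∫ t in 0..T, f (pos t ω) = additive f n ω + (T - (jumpTime n ω).toReal) • f (ω.1 n) := by
  have hn : jumpTime n ω ≠ ∞ := (hnT.trans_lt ENNReal.ofReal_lt_top).ne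
  rw [← intervalIntegral.integral_add_adjacent_intervals (intervalIntegrable_pos f ω _ _)
      (intervalIntegrable_pos f ω (jumpTime n ω).toReal _), integral_pos_jumpTime f hn,
      integral_pos_of_le_jumpTime_succ f hn (ENNReal.toReal_le_of_le_ofReal hT hnT) hTn.le]

lemma norm_integral_pos_sub_additive_le (f : C(E, V)) {ω : Traj E} {n : ℕ} {T : ℝ} (hT : 0 ≤ T)
    (hnT : jumpTime n ω ≤ ENNReal.ofReal T) :
    ‖(∫ t in 0..T, f (pos t ω)) - additive f n ω‖ ≤ (T - (jumpTime n ω).toReal) * ‖f‖ := by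
  have hn : jumpTime n ω ≠ ∞ := (hnT.trans_lt ENNReal.ofReal_lt_top).ne
  rw [← integral_pos_jumpTime f hn, intervalIntegral.integral_interval_sub_left
    (intervalIntegrable_pos f ω _ _) (intervalIntegrable_pos f ω _ _), mul_comm,
    ← abs_of_nonneg (sub_nonneg.2 (ENNReal.toReal_le_of_le_ofReal hT hnT))]
  exact intervalIntegral.norm_integral_le_of_norm_le_const fun t _ => f.norm_coe_le_norm _

end Traj

end Trajectories


section JumpKernel

lemma measurable_fin_snoc {α : Type*} [MeasurableSpace α] (n : ℕ) :
    Measurable fun q : (Fin n → α) × α => (Fin.snoc q.1 q.2 : Fin (n + 1) → α) := by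
  refine measurable_pi_lambda _ fun i => ?_
  cases i using Fin.lastCases with
  | last => simpa using measurable_snd
  | cast i => simpa using measurable_fst.eval

lemma lintegral_expMeasE_of_pos {ρ : ℝ} (hρ : 0 < ρ) {g : ℝ≥0∞ → ℝ≥0∞} (hg : Measurable g) :
    ∫⁻ s, g s ∂expMeasE ρ
      = ∫⁻ s in Ioi (0 : ℝ), ENNReal.ofReal (ρ * Real.exp (-(ρ * s))) * g (ENNReal.ofReal s) := by
  rw [expMeasE, if_pos hρ, lintegral_map hg ENNReal.measurable_ofReal,
    withDensity_indicator measurableSet_Ioi,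
    lintegral_withDensity_eq_lintegral_mul _ (by fun_prop) (by fun_prop)]
  rfl

lemma lintegral_expMeasE_of_nonpos {ρ : ℝ} (hρ : ρ ≤ 0) {g : ℝ≥0∞ → ℝ≥0∞} (hg : Measurable g) :
    ∫⁻ s, g s ∂expMeasE ρ = g ∞ := by
  rw [expMeasE, if_neg hρ.not_gt, lintegral_dirac' _ hg]

namespace ChainSetting

variable {E : Type*} [MeasurableSpace E] [TopologicalSpace E]

variable (S : ChainSetting E)

lemma continuous_p (x : E) : Continuous (S.p x) :=
  S.p_cont.comp (.prodMk_right x)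

instance : IsProbabilityMeasure S.lam := S.lam_prob

/-- The density of the holding time and the next state, given the present state `x`. It vanishes
when `x` is absorbing. -/
def jumpDensity (x : E) (q : ℝ × E) : ℝ≥0∞ :=
  ENNReal.ofReal (S.r x * Real.exp (-(S.r x * q.1))) * ENNReal.ofReal (S.p x q.2)

/-- The joint law of the holding time at `x` and of the next state. It is the zero measure when `x`
is absorbing. -/
def jumpKernel : Kernel E (ℝ × E) :=
  Kernel.withDensity (Kernel.const E ((volume.restrict (Ioi 0)).prod S.lam)) S.jumpDensity

instance : IsSFiniteKernel S.jumpKernel :=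
  Kernel.IsSFiniteKernel.withDensity _ fun _ _ =>
    ENNReal.mul_ne_top ENNReal.ofReal_ne_top ENNReal.ofReal_ne_top

lemma ae_jumpKernel_pos (x : E) : ∀ᵐ q ∂S.jumpKernel x, 0 < q.1 := by
  refine (Kernel.withDensity_absolutelyContinuous (κ := Kernel.const E _) (f := S.jumpDensity) x) ?_
  rw [Kernel.const_apply]
  exact Measure.quasiMeasurePreserving_fst.ae (ae_restrict_mem measurableSet_Ioi)

variable [OpensMeasurableSpace E]

lemma measurable_r : Measurable S.r := S.r_cont.measurable

lemma ae_r_pos : ∀ᵐ x ∂S.lam, 0 < S.r x := by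
  have hfin := ae_lt_top (by have := S.measurable_r; fun_prop) S.inv_r_int
  filter_upwards [hfin] with x hx
  simpa [ENNReal.inv_lt_top] using hx

lemma measurable_lintegral_expMeasE {g : ℝ≥0∞ → ℝ≥0∞} (hg : Measurable g) :
    Measurable fun x => ∫⁻ s, g s ∂expMeasE (S.r x) := by
  have hr := S.measurable_r
  have hrep : ∀ x, ∫⁻ s, g s ∂expMeasE (S.r x) = if 0 < S.r x then
      ∫⁻ s in Ioi (0 : ℝ), ENNReal.ofReal (S.r x * Real.exp (-(S.r x * s))) * g (ENNReal.ofReal s)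
      else g ∞ := fun x => by
    split_ifs with h
    · exact lintegral_expMeasE_of_pos h hg
    · exact lintegral_expMeasE_of_nonpos (not_lt.1 h) hg
  simp_rw [hrep]
  refine .ite (measurableSet_lt measurable_const hr) ?_ measurable_const
  exact Measurable.lintegral_prod_right' (ν := volume.restrict (Ioi (0 : ℝ)))
    (f := fun q : E × ℝ => ENNReal.ofReal (S.r q.1 * Real.exp (-(S.r q.1 * q.2)))
      * g (ENNReal.ofReal q.2)) (by fun_prop)

lemma lintegral_skel (x : E) {g : E → ℝ≥0∞} (hg : Measurable g) :
    ∫⁻ y, g y ∂S.skel x = ∫⁻ y, ENNReal.ofReal (S.p x y) * g y ∂S.lam := by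
  have hp := (S.continuous_p x).measurable.ennreal_ofReal
  rw [skel, lintegral_withDensity_eq_lintegral_mul _ hp hg]
  rfl

variable [SecondCountableTopology E]

lemma measurable_p : Measurable fun z : E × E => S.p z.1 z.2 := S.p_cont.measurable

lemma measurable_lintegral_skel {g : E → ℝ≥0∞} (hg : Measurable g) :
    Measurable fun x => ∫⁻ y, g y ∂S.skel x := by
  simp_rw [S.lintegral_skel _ hg]
  exact Measurable.lintegral_prod_right' (ν := S.lam)
    (f := fun q : E × E => ENNReal.ofReal (S.p q.1 q.2) * g q.2)
    (S.measurable_p.ennreal_ofReal.mul (hg.comp measurable_snd))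

lemma measurable_jumpDensity : Measurable (Function.uncurry S.jumpDensity) := by
  have hr := S.measurable_r
  exact Measurable.mul (by fun_prop)
    (S.measurable_p.comp (measurable_fst.prodMk measurable_snd.snd)).ennreal_ofReal

lemma lintegral_jumpKernel (x : E) {g : ℝ × E → ℝ≥0∞} (hg : Measurable g) :
    ∫⁻ q, g q ∂S.jumpKernel x = ∫⁻ s in Ioi (0 : ℝ),
      ENNReal.ofReal (S.r x * Real.exp (-(S.r x * s))) * ∫⁻ y, g (s, y) ∂S.skel x := by
  have hd : Measurable (S.jumpDensity x) := S.measurable_jumpDensity.comp measurable_prodMk_left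
  rw [jumpKernel, Kernel.lintegral_withDensity _ S.measurable_jumpDensity _ hg, Kernel.const_apply,
    lintegral_prod (fun q => S.jumpDensity x q * g q) (hd.mul hg).aemeasurable]
  refine lintegral_congr fun s => ?_
  have hgs : Measurable fun y => g (s, y) := hg.comp measurable_prodMk_left
  rw [S.lintegral_skel x hgs, ← lintegral_const_mul' _ _ ENNReal.ofReal_ne_top]
  simp only [jumpDensity, mul_assoc]

lemma lintegral_jumpKernel_mul (x : E) {g : ℝ → ℝ≥0∞} {k : E → ℝ≥0∞} (hg : Measurable g)
    (hk : Measurable k) :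
    ∫⁻ q, g q.1 * k q.2 ∂S.jumpKernel x
      = (∫⁻ s in Ioi (0 : ℝ), ENNReal.ofReal (S.r x * Real.exp (-(S.r x * s))) * g s)
        * ∫⁻ y, k y ∂S.skel x := by
  rw [S.lintegral_jumpKernel x (by fun_prop), ← lintegral_mul_const _ (by fun_prop)]
  refine lintegral_congr fun s => ?_
  simp only [lintegral_const_mul _ hk, mul_assoc]

end ChainSetting

/-- The states visited up to the `n`-th jump and the holding times before that jump. -/
def Traj.past {E : Type*} (n : ℕ) (ω : Traj E) : (Fin (n + 1) → E) × (Fin n → ℝ≥0∞) :=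
  (fun i => ω.1 i, fun i => ω.2 i)

lemma Traj.measurable_past {E : Type*} [MeasurableSpace E] (n : ℕ) :
    Measurable (past n : Traj E → _) := by
  unfold past
  fun_prop

namespace IsChainLaw

variable {E : Type*} [MeasurableSpace E] [TopologicalSpace E]
  {S : ChainSetting E} {x : E} {P : Measure (Traj E)}

lemma ae_r_pos [OpensMeasurableSpace E] (hP : IsChainLaw S.r S.skel x P) (hx : 0 < S.r x) (n : ℕ) :
    ∀ᵐ ω ∂P, 0 < S.r (ω.1 n) := by
  have hmeas : MeasurableSet {y | 0 < S.r y} := measurableSet_lt measurable_const S.measurable_r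
  have heval : ∀ n, Measurable fun ω : Traj E => ω.1 n := fun n => by fun_prop
  cases n with
  | zero =>
    refine ae_of_ae_map (heval 0).aemeasurable (p := fun y => 0 < S.r y) ?_
    rwa [hP.init, ae_dirac_iff hmeas]
  | succ n =>
    have hskel : ∀ z, S.skel z {y | 0 < S.r y}ᶜ = 0 := fun z =>
      withDensity_absolutelyContinuous _ _ S.ae_r_pos
    have hzero := hP.markov n 1 ({y | 0 < S.r y}ᶜ.indicator 1) measurable_one
      (measurable_one.indicator hmeas.compl)
    simp only [Pi.one_apply, one_mul, lintegral_indicator_one hmeas.compl, hskel,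
      lintegral_zero] at hzero
    rw [← lintegral_map (measurable_one.indicator hmeas.compl) (heval (n + 1)),
      lintegral_indicator_one hmeas.compl] at hzero
    exact ae_of_ae_map (heval (n + 1)).aemeasurable hzero

variable [OpensMeasurableSpace E] [SecondCountableTopology E]

lemma lintegral_mul_prod_succ (hP : IsChainLaw S.r S.skel x P) (n : ℕ)
    {f : (Fin (n + 1) → E) → ℝ≥0∞} {g : Fin n → ℝ≥0∞ → ℝ≥0∞} {g' : ℝ≥0∞ → ℝ≥0∞} {k : E → ℝ≥0∞}
    (hf : Measurable f) (hg : ∀ i, Measurable (g i)) (hg' : Measurable g') (hk : Measurable k) :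
    ∫⁻ ω, f (fun i => ω.1 i) * (∏ i : Fin n, g i (ω.2 i)) * (g' (ω.2 n) * k (ω.1 (n + 1))) ∂P
      = ∫⁻ ω, f (fun i => ω.1 i) * (∏ i : Fin n, g i (ω.2 i)) *
        ((∫⁻ s, g' s ∂expMeasE (S.r (ω.1 n))) * ∫⁻ y, k y ∂S.skel (ω.1 n)) ∂P := by
  have hexp := fun i => S.measurable_lintegral_expMeasE (hg i)
  have hexp' := S.measurable_lintegral_expMeasE hg'
  have hskel := S.measurable_lintegral_skel hk
  have hgsnoc : ∀ i, Measurable ((Fin.snoc g g' : Fin (n + 1) → ℝ≥0∞ → ℝ≥0∞) i) := by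
    simpa [Fin.forall_fin_succ'] using ⟨hg, hg'⟩
  have hholding := hP.holding n (fun z => f (fun i => z i) *
    ((∫⁻ s, g' s ∂expMeasE (S.r (z n))) * ∫⁻ y, k y ∂S.skel (z n))) g
    ((hf.comp (by fun_prop)).mul ((hexp'.comp (measurable_pi_apply _)).mul
      (hskel.comp (measurable_pi_apply _)))) hg
  have hmarkov := hP.markov n
    (fun z => f z * (∏ i : Fin n, ∫⁻ s, g i s ∂expMeasE (S.r (z i.castSucc)))
      * ∫⁻ s, g' s ∂expMeasE (S.r (z (Fin.last n)))) k
    ((hf.mul (Finset.measurable_fun_prod _ fun i _ => (hexp i).comp (measurable_pi_apply _))).mul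
      (hexp'.comp (measurable_pi_apply _))) hk
  have hholding' := hP.holding (n + 1) (fun z => f (fun i => z i) * k (z (n + 1))) _
    (by fun_prop) hgsnoc
  simp only [Fin.prod_univ_castSucc, Fin.snoc_castSucc, Fin.snoc_last, Fin.val_castSucc,
    Fin.val_last] at hholding' hmarkov
  calc _ = _ := lintegral_congr fun ω => by ring
    _ = _ := hholding'
    _ = _ := lintegral_congr fun ω => by ring
    _ = _ := hmarkov
    _ = _ := lintegral_congr fun ω => by ring
    _ = _ := hholding.symm
    _ = _ := lintegral_congr fun ω => by ring

lemma ae_holding_ne_top (hP : IsChainLaw S.r S.skel x P) (hx : 0 < S.r x) :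
    ∀ᵐ ω ∂P, ∀ n, ω.2 n ≠ ∞ := by
  refine ae_all_iff.2 fun n => ?_
  have hind : Measurable (({∞} : Set ℝ≥0∞).indicator (1 : ℝ≥0∞ → ℝ≥0∞)) :=
    measurable_one.indicator (measurableSet_singleton _)
  have hstep := hP.lintegral_mul_prod_succ n (f := 1) (g := 1) (k := 1) measurable_one
    (fun _ => measurable_one) hind measurable_one
  have hzero : ∫⁻ ω, ({∞} : Set ℝ≥0∞).indicator 1 (ω.2 n) ∂P = 0 := by
    simp only [Pi.one_apply, Finset.prod_const_one, one_mul, mul_one] at hstep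
    rw [hstep, lintegral_eq_zero_of_ae_eq_zero]
    filter_upwards [hP.ae_r_pos hx n] with ω hω
    rw [lintegral_expMeasE_of_pos hω hind]
    simp
  filter_upwards [(lintegral_eq_zero_iff (by fun_prop)).1 hzero] with ω hω htop
  simp [htop] at hω

lemma lintegral_mul_prod_jump (hP : IsChainLaw S.r S.skel x P) (hx : 0 < S.r x) (n : ℕ)
    {f : (Fin (n + 1) → E) → ℝ≥0∞} {g : Fin n → ℝ≥0∞ → ℝ≥0∞} {g' : ℝ≥0∞ → ℝ≥0∞} {k : E → ℝ≥0∞}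
    (hf : Measurable f) (hg : ∀ i, Measurable (g i)) (hg' : Measurable g') (hk : Measurable k) :
    ∫⁻ ω, f (fun i => ω.1 i) * (∏ i : Fin n, g i (ω.2 i)) * (g' (ω.2 n) * k (ω.1 (n + 1))) ∂P
      = ∫⁻ ω, f (fun i => ω.1 i) * (∏ i : Fin n, g i (ω.2 i)) *
        ∫⁻ q, g' (ENNReal.ofReal q.1) * k q.2 ∂S.jumpKernel (ω.1 n) ∂P := by
  rw [hP.lintegral_mul_prod_succ n hf hg hg' hk]
  refine lintegral_congr_ae ?_
  filter_upwards [hP.ae_r_pos hx n] with ω hω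
  rw [lintegral_expMeasE_of_pos hω hg',
    S.lintegral_jumpKernel_mul _ (g := fun s => g' (ENNReal.ofReal s)) (by fun_prop) hk]

variable [BorelSpace E] [TopologicalSpace.MetrizableSpace E]

lemma lintegral_past_succ (hP : IsChainLaw S.r S.skel x P)
    (hx : 0 < S.r x) (n : ℕ) {G : (Fin (n + 2) → E) × (Fin (n + 1) → ℝ≥0∞) → ℝ≥0∞}
    (hG : Measurable G) :
    ∫⁻ ω, G (Traj.past (n + 1) ω) ∂P = ∫⁻ ω, ∫⁻ q,
      G (Fin.snoc (Traj.past n ω).1 q.2, Fin.snoc (Traj.past n ω).2 (ENNReal.ofReal q.1))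
        ∂S.jumpKernel (ω.1 n) ∂P := by
  have := hP.prob
  let κ : Kernel ((Fin (n + 1) → E) × (Fin n → ℝ≥0∞)) (ℝ × E) :=
    S.jumpKernel.comap (fun h => h.1 (Fin.last n)) (by fun_prop)
  let glue : ((Fin (n + 1) → E) × (Fin n → ℝ≥0∞)) × (ℝ × E) →
      (Fin (n + 2) → E) × (Fin (n + 1) → ℝ≥0∞) :=
    fun q => (Fin.snoc q.1.1 q.2.2, Fin.snoc q.1.2 (ENNReal.ofReal q.2.1))
  have hglue : Measurable glue :=
    ((measurable_fin_snoc _).comp (measurable_fst.fst.prodMk measurable_snd.snd)).prodMk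
      ((measurable_fin_snoc _).comp (measurable_fst.snd.prodMk measurable_snd.fst.ennreal_ofReal))
  have hglued : ∀ {G : (Fin (n + 2) → E) × (Fin (n + 1) → ℝ≥0∞) → ℝ≥0∞}, Measurable G →
      ∫⁻ h, G h ∂((P.map (Traj.past n)) ⊗ₘ κ).map glue
        = ∫⁻ ω, ∫⁻ q, G (glue (Traj.past n ω, q)) ∂S.jumpKernel (ω.1 n) ∂P := fun {G} hG => by
    have hGg : Measurable fun q => G (glue q) := hG.comp hglue
    rw [lintegral_map hG hglue, Measure.lintegral_compProd hGg,
      lintegral_map hGg.lintegral_kernel_prod_right' (Traj.measurable_past n)]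
    rfl
  rw [← hglued hG, ← lintegral_map hG (Traj.measurable_past _)]
  congr 1
  refine Measure.ext_of_lintegral_prod_mul_prod_boundedContinuousFunction fun f g => ?_
  rw [lintegral_map (by fun_prop) (Traj.measurable_past _), hglued (by fun_prop)]
  have hstep := hP.lintegral_mul_prod_jump hx n
    (f := fun z => ∏ i : Fin (n + 1), (f i.castSucc (z i) : ℝ≥0∞))
    (g := fun i s => g i.castSucc s) (g' := fun s => g (Fin.last n) s)
    (k := fun y => f (Fin.last (n + 1)) y)
    (by fun_prop) (fun i => by fun_prop) (by fun_prop) (by fun_prop)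
  simp only [Traj.past, glue, Fin.prod_univ_castSucc, Fin.snoc_castSucc, Fin.snoc_last,
    ENNReal.coe_mul, ENNReal.ofNNReal_finsetProd, Fin.val_castSucc, Fin.val_last] at hstep ⊢
  calc _ = _ := lintegral_congr fun ω => by ring
    _ = _ := hstep
    _ = _ := lintegral_congr fun ω => by
      rw [← lintegral_const_mul _ (by fun_prop)]
      exact lintegral_congr fun q => by ring

lemma lintegral_additive_jump {V : Type*} [NormedAddCommGroup V] [NormedSpace ℝ V]
    [MeasurableSpace V] [BorelSpace V] [SecondCountableTopology V] {F : E → V}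
    (hP : IsChainLaw S.r S.skel x P) (hx : 0 < S.r x) (hF : Measurable F) (n : ℕ)
    {G : (E × V) × (ℝ × E) → ℝ≥0∞} (hG : Measurable G) :
    ∫⁻ ω, G ((ω.1 n, Traj.additive F n ω), ((ω.2 n).toReal, ω.1 (n + 1))) ∂P
      = ∫⁻ ω, ∫⁻ q, G ((ω.1 n, Traj.additive F n ω), q) ∂S.jumpKernel (ω.1 n) ∂P := by
  let A : (Fin (n + 2) → E) × (Fin (n + 1) → ℝ≥0∞) → ℝ≥0∞ := fun h =>
    G ((h.1 (Fin.last n).castSucc,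
        ∑ i : Fin n, (h.2 i.castSucc).toReal • F (h.1 i.castSucc.castSucc)),
      ((h.2 (Fin.last n)).toReal, h.1 (Fin.last (n + 1))))
  have hA : Measurable A := by fun_prop
  have hstep := hP.lintegral_past_succ hx n hA
  simp only [A, Traj.past, Fin.snoc_castSucc, Fin.snoc_last, Fin.val_castSucc, Fin.val_last]
    at hstep
  simp only [Traj.additive, Finset.sum_range, hstep]
  refine lintegral_congr fun ω => lintegral_congr_ae ?_
  filter_upwards [S.ae_jumpKernel_pos (ω.1 n)] with q hq
  rw [ENNReal.toReal_ofReal hq.le]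

end IsChainLaw

end JumpKernel

section AdditiveKernel

lemma lintegral_kernel_pow_succ {α : Type*} [MeasurableSpace α] (κ : Kernel α α) (n : ℕ)
    {h : α → ℝ≥0∞} (hh : Measurable h) (z : α) :
    ∫⁻ w, h w ∂(κ ^ (n + 1)) z = ∫⁻ w, ∫⁻ w', h w' ∂κ w ∂(κ ^ n) z := by
  rw [pow_succ']
  exact Kernel.lintegral_comp _ _ _ hh

variable {E : Type*} [MeasurableSpace E] [TopologicalSpace E] [BorelSpace E]
  (S : ChainSetting E) {V : Type*} [NormedAddCommGroup V] [NormedSpace ℝ V] [MeasurableSpace V]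
  [BorelSpace V] [SecondCountableTopology V] (F : C(E, V))

namespace ChainSetting

lemma measurable_addKernel_map :
    Measurable fun q : (E × V) × ℝ × E => (q.2.2, q.1.2 + q.2.1 • F q.1.1) := by
  have := F.continuous.measurable
  fun_prop

/-- The transition kernel of the pair formed by the skeleton chain and the additive functional
`Traj.additive F`. -/
def addKernel : Kernel (E × V) (E × V) :=
  (Kernel.id ×ₖ S.jumpKernel.prodMkRight V).map
    fun q => (q.2.2, q.1.2 + q.2.1 • F q.1.1)

lemma lintegral_addKernel {h : E × V → ℝ≥0∞} (hh : Measurable h) (z : E × V) :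
    ∫⁻ w, h w ∂S.addKernel F z = ∫⁻ q, h (q.2, z.2 + q.1 • F z.1) ∂S.jumpKernel z.1 := by
  have hF := measurable_addKernel_map F
  have hhF : Measurable fun q : (E × V) × ℝ × E => h (q.2.2, q.1.2 + q.2.1 • F q.1.1) :=
    hh.comp hF
  rw [addKernel, Kernel.lintegral_map _ hF _ hh, Kernel.lintegral_id_prod hhF,
    Kernel.lintegral_prodMkRight]

end ChainSetting

namespace IsChainLaw

variable [SecondCountableTopology E] [TopologicalSpace.MetrizableSpace E] {S} {x : E}
  {P : Measure (Traj E)}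

lemma lintegral_additive_eq_pow (hP : IsChainLaw S.r S.skel x P) (hx : 0 < S.r x) (n : ℕ)
    {h : E × V → ℝ≥0∞} (hh : Measurable h) :
    ∫⁻ ω, h (ω.1 n, Traj.additive F n ω) ∂P = ∫⁻ w, h w ∂(S.addKernel F ^ n) (x, 0) := by
  induction n generalizing h with
  | zero =>
    have hh0 : Measurable fun y => h (y, (0 : V)) := by fun_prop
    have hinit := lintegral_map (μ := P) hh0 (g := fun ω => ω.1 0) (by fun_prop)
    rw [hP.init, lintegral_dirac' _ hh0] at hinit
    simp only [Traj.additive_zero, ← hinit, pow_zero]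
    exact (lintegral_dirac' _ hh).symm
  | succ n ih =>
    rw [lintegral_kernel_pow_succ _ n hh, ← ih hh.lintegral_kernel]
    simp only [Traj.additive_succ, S.lintegral_addKernel F hh]
    exact hP.lintegral_additive_jump hx F.continuous.measurable n
      (hh.comp (ChainSetting.measurable_addKernel_map F))

end IsChainLaw

end AdditiveKernel

section Generator

lemma integrable_of_continuous {α β : Type*} [TopologicalSpace α] [CompactSpace α]
    [MeasurableSpace α] [OpensMeasurableSpace α] [NormedAddCommGroup β] {f : α → β}
    (hf : Continuous f) (μ : Measure α) [IsFiniteMeasure μ] : Integrable f μ := by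
  simpa using hf.continuousOn.integrableOn_compact' (μ := μ) isCompact_univ .univ

lemma lintegral_Ioi_ofReal_mul_exp_neg {k : ℝ} (hk : 0 < k) (a : ℝ) :
    ∫⁻ s in Ioi a, ENNReal.ofReal (k * Real.exp (-(k * s)))
      = ENNReal.ofReal (Real.exp (-(k * a))) := by
  have hint : IntegrableOn (fun s => Real.exp (-(k * s))) (Ioi a) := by
    simpa only [neg_mul] using exp_neg_integrableOn_Ioi a hk
  rw [← ofReal_integral_eq_lintegral_ofReal (hint.const_mul k) (ae_of_all _ fun s => by positivity)]
  have hexp := integral_exp_mul_Ioi (neg_lt_zero.2 hk) a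
  simp only [neg_mul] at hexp
  rw [integral_const_mul, hexp]
  congr 1
  field_simp

/-- The pointwise exponential of a continuous function. -/
def expMap {E : Type*} [TopologicalSpace E] (φ : C(E, ℝ)) : C(E, ℝ) :=
  ⟨fun x => Real.exp (φ x), by fun_prop⟩

namespace ChainSetting

lemma exists_r_le {E : Type*} [MeasurableSpace E] [TopologicalSpace E] [CompactSpace E]
    (S : ChainSetting E) : ∃ R : ℝ, 0 < R ∧ ∀ x, S.r x ≤ R := by
  obtain ⟨C, hC⟩ := isCompact_univ.exists_bound_of_continuousOn S.r_cont.continuousOn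
  exact ⟨max C 1, by positivity, fun x =>
    (le_abs_self _).trans ((hC x (mem_univ x)).trans (le_max_left C 1))⟩

section Skeleton

variable {E : Type*} [MeasurableSpace E] [TopologicalSpace E] [OpensMeasurableSpace E]
  (S : ChainSetting E)

instance isProbabilityMeasure_skel (x : E) : IsProbabilityMeasure (S.skel x) where
  measure_univ := by
    rw [skel, withDensity_apply _ .univ, Measure.restrict_univ,
      ← ofReal_integral_eq_lintegral_ofReal (integrable_of_integral_eq_one (S.p_int x))
      (ae_of_all _ fun y => (S.p_pos x y).le), S.p_int, ENNReal.ofReal_one]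

lemma integral_skel (x : E) (h : E → ℝ) : ∫ y, h y ∂S.skel x = ∫ y, S.p x y * h y ∂S.lam := by
  rw [skel, integral_withDensity_eq_integral_toReal_smul
    (S.continuous_p x).measurable.ennreal_ofReal (ae_of_all _ fun _ => ENNReal.ofReal_lt_top)]
  simp only [ENNReal.toReal_ofReal (S.p_pos x _).le, smul_eq_mul]

end Skeleton

variable {E : Type*} [MeasurableSpace E] [TopologicalSpace E] [PolishSpace E] [CompactSpace E]
  [BorelSpace E] (S : ChainSetting E)

/-- The transition operator `h ↦ ∫ p(·, dy) h(y)` of the skeleton chain, acting on continuous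
functions. -/
def skelOp : C(E, ℝ) →ₗ[ℝ] C(E, ℝ) where
  toFun h :=
    { toFun := fun x => ∫ y, h y ∂S.skel x
      continuous_toFun := by
        have hcont : Continuous (Function.uncurry fun x y => S.p x y * h y) :=
          S.p_cont.mul (h.continuous.comp continuous_snd)
        simpa only [S.integral_skel, Measure.restrict_univ] using
          continuous_parametric_integral_of_continuous (μ := S.lam) hcont isCompact_univ }
  map_add' h k := ContinuousMap.ext fun _ =>
    integral_add (integrable_of_continuous h.continuous _) (integrable_of_continuous k.continuous _)
  map_smul' c h := ContinuousMap.ext fun _ => integral_const_mul c h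

lemma skelOp_apply (h : C(E, ℝ)) (x : E) : S.skelOp h x = ∫ y, h y ∂S.skel x := rfl

lemma skelOp_nonneg {h : C(E, ℝ)} (hh : ∀ x, 0 ≤ h x) (x : E) : 0 ≤ S.skelOp h x :=
  integral_nonneg hh

lemma skelOp_pos {h : C(E, ℝ)} (hh : ∀ x, 0 < h x) (x : E) : 0 < S.skelOp h x :=
  (integral_pos_iff_support_of_nonneg (fun y => (hh y).le)
    (integrable_of_continuous h.continuous _)).2 <| by
      rw [Function.support_eq_univ fun y => (hh y).ne']
      simp

lemma lintegral_skel_ofReal {h : C(E, ℝ)} (hh : ∀ x, 0 ≤ h x) (x : E) :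
    ∫⁻ y, ENNReal.ofReal (h y) ∂S.skel x = ENNReal.ofReal (S.skelOp h x) :=
  (ofReal_integral_eq_lintegral_ofReal (integrable_of_continuous h.continuous _)
    (ae_of_all _ hh)).symm

/-- The Donsker–Varadhan integrand `-e^{-φ} L e^φ`, with `L` the generator of the chain. -/
def dvMap (φ : C(E, ℝ)) : C(E, ℝ) where
  toFun x := S.r x - S.r x * S.skelOp (expMap φ) x * Real.exp (-φ x)
  continuous_toFun := by
    have := S.r_cont
    fun_prop

lemma dvMap_apply (φ : C(E, ℝ)) (x : E) :
    S.dvMap φ x = S.r x - S.r x * S.skelOp (expMap φ) x * Real.exp (-φ x) := rfl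

lemma integral_muc (μ : Measure E) [IsFiniteMeasure μ] {f : E × E → ℝ} (hf : Continuous f) :
    ∫ z, f z ∂S.muc μ = ∫ x, S.r x * ∫ y, f (x, y) ∂S.skel x ∂μ := by
  have hr := S.r_cont
  have hp := S.p_cont
  have hd : Continuous fun z : E × E => S.r z.1 * S.p z.1 z.2 := by fun_prop
  have hnn : ∀ z : E × E, 0 ≤ S.r z.1 * S.p z.1 z.2 :=
    fun z => mul_nonneg (S.r_nonneg _) (S.p_pos _ _).le
  rw [muc, integral_withDensity_eq_integral_toReal_smul hd.measurable.ennreal_ofReal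
    (ae_of_all _ fun _ => ENNReal.ofReal_lt_top)]
  simp only [ENNReal.toReal_ofReal (hnn _), smul_eq_mul]
  have hint : Integrable (fun z : E × E => S.r z.1 * S.p z.1 z.2 * f z) (μ.prod S.lam) :=
    integrable_of_continuous (hd.mul hf) _
  rw [integral_prod _ hint]
  simp only [S.integral_skel, mul_assoc, integral_const_mul]

lemma neg_integral_muc_eq (μ : Measure E) [IsFiniteMeasure μ] (φ : C(E, ℝ)) :
    -∫ z : E × E, (Real.exp (φ z.2 - φ z.1) - 1) ∂S.muc μ = ∫ x, S.dvMap φ x ∂μ := by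
  rw [S.integral_muc μ (by fun_prop), ← integral_neg]
  refine integral_congr_ae (ae_of_all _ fun x => ?_)
  have hinner : ∫ y, (Real.exp (φ y - φ x) - 1) ∂S.skel x
      = Real.exp (-φ x) * S.skelOp (expMap φ) x - 1 := by
    rw [skelOp_apply, ← integral_const_mul, integral_sub _ (integrable_const _)]
    · simp [expMap, sub_eq_add_neg, Real.exp_add, mul_comm]
    · exact integrable_of_continuous (by fun_prop) _
  simp only [hinner, dvMap_apply]
  ring

lemma Ihat0_eq_iSup (μ : Measure E) [IsFiniteMeasure μ] :
    S.Ihat0 μ = ⨆ φ : C(E, ℝ), ENNReal.ofReal (∫ x, S.dvMap φ x ∂μ) := by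
  simp only [Ihat0, S.neg_integral_muc_eq]

end ChainSetting

end Generator

section UpperBound

namespace Traj

lemma exists_additive_one_le_lt {E : Type*} {ω : Traj E} {T : ℝ} (hT : 0 ≤ T)
    (hω : ∃ n, T < additive (fun _ => (1 : ℝ)) n ω) :
    ∃ n, additive (fun _ => (1 : ℝ)) n ω ≤ T ∧ T < additive (fun _ => (1 : ℝ)) (n + 1) ω := by
  classical
  obtain ⟨n, hn⟩ : ∃ n, Nat.find hω = n + 1 := by
    refine Nat.exists_eq_succ_of_ne_zero fun h0 => ?_
    have hlt := Nat.find_spec hω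
    rw [h0, additive_zero] at hlt
    exact hlt.not_ge hT
  exact ⟨n, not_lt.1 (Nat.find_min hω (by lia)), hn ▸ Nat.find_spec hω⟩

lemma measurable_exp_neg_additive_one {E : Type*} [MeasurableSpace E] (n : ℕ) :
    Measurable fun ω : Traj E =>
      ENNReal.ofReal (Real.exp (-additive (fun _ => (1 : ℝ)) n ω)) := by
  have hA := measurable_additive (E := E) (F := fun _ => (1 : ℝ)) measurable_const n
  fun_prop

end Traj

namespace ChainSetting

section LaplaceTransform

variable {E : Type*} [MeasurableSpace E] [TopologicalSpace E] [OpensMeasurableSpace E]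
  [SecondCountableTopology E] (S : ChainSetting E)

lemma lintegral_jumpKernel_fst (x : E) {g : ℝ → ℝ≥0∞} (hg : Measurable g) :
    ∫⁻ q, g q.1 ∂S.jumpKernel x
      = ∫⁻ s in Ioi (0 : ℝ), ENNReal.ofReal (S.r x * Real.exp (-(S.r x * s))) * g s := by
  simpa using S.lintegral_jumpKernel x (hg.comp measurable_fst)

lemma lintegral_jumpKernel_exp_neg (x : E) :
    ∫⁻ q, ENNReal.ofReal (Real.exp (-q.1)) ∂S.jumpKernel x
      = ENNReal.ofReal (S.r x / (S.r x + 1)) := by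
  have hr := S.r_nonneg x
  rw [S.lintegral_jumpKernel_fst x (g := fun s => ENNReal.ofReal (Real.exp (-s))) (by fun_prop)]
  calc _ = ∫⁻ s in Ioi (0 : ℝ), ENNReal.ofReal (S.r x / (S.r x + 1))
        * ENNReal.ofReal ((S.r x + 1) * Real.exp (-((S.r x + 1) * s))) := by
        refine lintegral_congr fun s => ?_
        have hexp : Real.exp (-((S.r x + 1) * s)) = Real.exp (-(S.r x * s)) * Real.exp (-s) := by
          rw [← Real.exp_add]
          ring_nf
        rw [← ENNReal.ofReal_mul (by positivity), ← ENNReal.ofReal_mul (by positivity), hexp]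
        congr 1
        field_simp
    _ = _ := by
        rw [lintegral_const_mul _ (by fun_prop),
          lintegral_Ioi_ofReal_mul_exp_neg (by positivity)]
        simp

end LaplaceTransform

end ChainSetting

namespace IsChainLaw

variable {E : Type*} [MeasurableSpace E] [TopologicalSpace E] [PolishSpace E] [BorelSpace E]
  {S : ChainSetting E} {x : E} {P : Measure (Traj E)}

lemma lintegral_exp_neg_additive_one_le (hP : IsChainLaw S.r S.skel x P) (hx : 0 < S.r x) {R : ℝ}
    (hR : ∀ z, S.r z ≤ R) (n : ℕ) :
    ∫⁻ ω, ENNReal.ofReal (Real.exp (-Traj.additive (fun _ => (1 : ℝ)) n ω)) ∂P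
      ≤ ENNReal.ofReal (R / (R + 1)) ^ n := by
  have := hP.prob
  have hjump : ∀ (z : E) (v : ℝ),
      ∫⁻ q, ENNReal.ofReal (Real.exp (-(v + q.1 • 1))) ∂S.jumpKernel z
        ≤ ENNReal.ofReal (R / (R + 1)) * ENNReal.ofReal (Real.exp (-v)) := fun z v => by
    have hr := S.r_nonneg z
    have hRz := hR z
    simp only [smul_eq_mul, mul_one, neg_add, Real.exp_add, ENNReal.ofReal_mul (Real.exp_nonneg _)]
    rw [lintegral_const_mul _ (by fun_prop), S.lintegral_jumpKernel_exp_neg, mul_comm]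
    refine mul_le_mul_left (ENNReal.ofReal_le_ofReal ?_) _
    rw [div_le_div_iff₀ (by linarith) (by linarith)]
    linarith
  induction n with
  | zero => simp
  | succ n ih =>
    have hstep := hP.lintegral_additive_jump hx (F := fun _ => (1 : ℝ)) measurable_const n
      (G := fun q => ENNReal.ofReal (Real.exp (-(q.1.2 + q.2.1 • 1)))) (by fun_prop)
    simp only [Traj.additive_succ, hstep]
    refine (lintegral_mono fun ω => hjump _ _).trans ?_
    rw [lintegral_const_mul _ (Traj.measurable_exp_neg_additive_one n), pow_succ']
    gcongr

-- The Laplace transform of the `n`-th jump time decays geometrically, since `r` is bounded.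
lemma ae_exists_lt_additive_one [CompactSpace E] (hP : IsChainLaw S.r S.skel x P) (hx : 0 < S.r x) :
    ∀ᵐ ω ∂P, ∀ T, ∃ n, T < Traj.additive (fun _ => (1 : ℝ)) n ω := by
  obtain ⟨R, hR, hrR⟩ := S.exists_r_le
  have hρ : ENNReal.ofReal (R / (R + 1)) < 1 := by
    rw [ENNReal.ofReal_lt_one, div_lt_one (by positivity)]
    exact lt_add_one R
  have hsum : ∫⁻ ω, ∑' n, ENNReal.ofReal (Real.exp (-Traj.additive (fun _ => (1 : ℝ)) n ω)) ∂P
      ≠ ∞ := by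
    rw [lintegral_tsum fun n => (Traj.measurable_exp_neg_additive_one n).aemeasurable]
    refine ne_top_of_le_ne_top ?_
      (ENNReal.tsum_le_tsum (hP.lintegral_exp_neg_additive_one_le hx hrR))
    rw [ENNReal.tsum_geometric]
    exact ENNReal.inv_ne_top.2 (tsub_pos_of_lt hρ).ne'
  filter_upwards [ae_lt_top (.tsum Traj.measurable_exp_neg_additive_one) hsum] with ω hω T
  obtain ⟨n, hn⟩ := ((ENNReal.tendsto_atTop_zero_of_tsum_ne_top hω.ne).eventually_lt_const
    (ENNReal.ofReal_pos.2 (Real.exp_pos (-T)))).exists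
  exact ⟨n, by simpa [ENNReal.ofReal_lt_ofReal_iff, Real.exp_pos] using hn⟩

end IsChainLaw


namespace ChainSetting

section LiveWeight

variable {E : Type*} [TopologicalSpace E]

/-- The weight `e^{u + φ(z)}` of a jump to `z` at time `t` with accumulated additive functional
`u`, set to zero for `t > T`. -/
def liveWeight (φ : C(E, ℝ)) (T : ℝ) (w : E × ℝ × ℝ) : ℝ≥0∞ :=
  if w.2.1 ≤ T then ENNReal.ofReal (Real.exp (w.2.2 + φ w.1)) else 0

lemma measurable_liveWeight [MeasurableSpace E] [OpensMeasurableSpace E] (φ : C(E, ℝ)) (T : ℝ) :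
    Measurable (liveWeight φ T) := by
  have hset : MeasurableSet {w : E × ℝ × ℝ | w.2.1 ≤ T} :=
    measurableSet_le (by fun_prop) (by fun_prop)
  exact .ite hset (by fun_prop) measurable_const

end LiveWeight

section ExponentialMartingale

variable {E : Type*} [MeasurableSpace E] [TopologicalSpace E] [PolishSpace E] [CompactSpace E]
  [BorelSpace E] (S : ChainSetting E)

lemma lintegral_skel_exp_add (φ : C(E, ℝ)) (c : ℝ) (x : E) :
    ∫⁻ y, ENNReal.ofReal (Real.exp (c + φ y)) ∂S.skel x
      = ENNReal.ofReal (Real.exp c * S.skelOp (expMap φ) x) := by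
  simp only [Real.exp_add, ENNReal.ofReal_mul (Real.exp_nonneg c)]
  rw [lintegral_const_mul _ (by fun_prop),
    ← S.lintegral_skel_ofReal (h := expMap φ) (fun y => Real.exp_nonneg _)]
  rfl

/-- The jump rate `e^{-φ(x)} ∫ c(x, dy) e^{φ(y)}` of the chain tilted by `φ`. -/
def tiltRate (φ : C(E, ℝ)) (x : E) : ℝ := S.r x * S.skelOp (expMap φ) x * Real.exp (-φ x)

lemma dvMap_eq_sub_tiltRate (φ : C(E, ℝ)) (x : E) : S.dvMap φ x = S.r x - S.tiltRate φ x := rfl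

lemma exp_mul_tiltRate (φ : C(E, ℝ)) (x : E) :
    Real.exp (φ x) * S.tiltRate φ x = S.r x * S.skelOp (expMap φ) x := by
  rw [tiltRate, Real.exp_neg]
  field_simp

lemma tiltRate_pos (φ : C(E, ℝ)) {x : E} (hx : 0 < S.r x) : 0 < S.tiltRate φ x :=
  mul_pos (mul_pos hx (S.skelOp_pos (fun _ => Real.exp_pos _) x)) (Real.exp_pos _)

lemma mul_lintegral_skel_exp_add (φ : C(E, ℝ)) (x : E) (s : ℝ) :
    ENNReal.ofReal (S.r x * Real.exp (-(S.r x * s)))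
        * ∫⁻ y, ENNReal.ofReal (Real.exp (s * S.dvMap φ x + φ y)) ∂S.skel x
      = ENNReal.ofReal (Real.exp (φ x))
        * ENNReal.ofReal (S.tiltRate φ x * Real.exp (-(S.tiltRate φ x * s))) := by
  have hr := S.r_nonneg x
  have hexp : Real.exp (-(S.tiltRate φ x * s))
      = Real.exp (-(S.r x * s)) * Real.exp (s * S.dvMap φ x) := by
    rw [← Real.exp_add, dvMap_eq_sub_tiltRate]
    ring_nf
  rw [lintegral_skel_exp_add, ← ENNReal.ofReal_mul (by positivity),
    ← ENNReal.ofReal_mul (by positivity), hexp, ← mul_assoc (Real.exp (φ x)), exp_mul_tiltRate]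
  ring_nf

lemma setLIntegral_Ioi_mul_exp_dvMap (φ : C(E, ℝ)) {x : E} (hx : 0 < S.r x) (a : ℝ) :
    ∫⁻ s in Ioi a, ENNReal.ofReal (S.r x * Real.exp (-(S.r x * s)))
        * ENNReal.ofReal (Real.exp (a * S.dvMap φ x + φ x))
      = ∫⁻ s in Ioi a, ENNReal.ofReal (Real.exp (φ x))
        * ENNReal.ofReal (S.tiltRate φ x * Real.exp (-(S.tiltRate φ x * s))) := by
  rw [lintegral_mul_const _ (by fun_prop), lintegral_Ioi_ofReal_mul_exp_neg hx,
    lintegral_const_mul _ (by fun_prop), lintegral_Ioi_ofReal_mul_exp_neg (S.tiltRate_pos φ hx),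
    ← ENNReal.ofReal_mul (by positivity), ← ENNReal.ofReal_mul (by positivity),
    ← Real.exp_add, ← Real.exp_add, dvMap_eq_sub_tiltRate]
  ring_nf

-- Both the jumps before `a` and the survival past `a` integrate as under the density
-- `s ↦ e^φ k e^{-ks}`, with `k` the tilted rate.
lemma lintegral_jumpKernel_tilt (φ : C(E, ℝ)) {x : E} (hx : 0 < S.r x) {a : ℝ} (ha : 0 ≤ a) :
    ∫⁻ q : ℝ × E, ENNReal.ofReal (Real.exp
        (if q.1 ≤ a then q.1 * S.dvMap φ x + φ q.2 else a * S.dvMap φ x + φ x)) ∂S.jumpKernel x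
      = ENNReal.ofReal (Real.exp (φ x)) := by
  have hmeas : Measurable fun q : ℝ × E => ENNReal.ofReal (Real.exp
      (if q.1 ≤ a then q.1 * S.dvMap φ x + φ q.2 else a * S.dvMap φ x + φ x)) := by
    have hset : MeasurableSet {q : ℝ × E | q.1 ≤ a} := measurableSet_le (by fun_prop) (by fun_prop)
    exact (Real.measurable_exp.comp (.ite hset (by fun_prop) (by fun_prop))).ennreal_ofReal
  rw [S.lintegral_jumpKernel x hmeas, ← Ioc_union_Ioi_eq_Ioi ha,
    lintegral_union measurableSet_Ioi Ioc_disjoint_Ioi_same,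
    setLIntegral_congr_fun measurableSet_Ioc fun s hs => by
      simp only [if_pos hs.2, mul_lintegral_skel_exp_add]
      rfl,
    setLIntegral_congr_fun measurableSet_Ioi fun s hs => by
      simp only [if_neg (not_le.2 (mem_Ioi.1 hs)), lintegral_const, measure_univ, mul_one]
      rfl,
    S.setLIntegral_Ioi_mul_exp_dvMap φ hx, ← lintegral_union measurableSet_Ioi
    Ioc_disjoint_Ioi_same, Ioc_union_Ioi_eq_Ioi ha, lintegral_const_mul _ (by fun_prop),
    lintegral_Ioi_ofReal_mul_exp_neg (S.tiltRate_pos φ hx)]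
  simp

/-- The weight at time `T` of a holding period at `z` of length `s`, started at time `t` with
accumulated additive functional `u`: it is `e^{u + (T - t) dvMap φ z + φ z}` if the period contains
`T`, and zero otherwise. -/
def stopWeight (φ : C(E, ℝ)) (T : ℝ) (w : (E × ℝ × ℝ) × ℝ × E) : ℝ≥0∞ :=
  if w.1.2.1 ≤ T ∧ T < w.1.2.1 + w.2.1 then
    ENNReal.ofReal (Real.exp (w.1.2.2 + (T - w.1.2.1) * S.dvMap φ w.1.1 + φ w.1.1))
  else 0

lemma measurable_stopWeight (φ : C(E, ℝ)) (T : ℝ) : Measurable (S.stopWeight φ T) := by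
  have hstart : MeasurableSet {w : (E × ℝ × ℝ) × ℝ × E | w.1.2.1 ≤ T} :=
    measurableSet_le (by fun_prop) (by fun_prop)
  have hend : MeasurableSet {w : (E × ℝ × ℝ) × ℝ × E | T < w.1.2.1 + w.2.1} :=
    measurableSet_lt (by fun_prop) (by fun_prop)
  exact .ite (hstart.inter hend) (by fun_prop) measurable_const

lemma lintegral_liveWeight_add_stopWeight (φ : C(E, ℝ)) (T : ℝ) {x : E} (hx : 0 < S.r x)
    (v : ℝ × ℝ) :
    ∫⁻ q, (liveWeight φ T (q.2, v + q.1 • (1, S.dvMap φ x)) + S.stopWeight φ T ((x, v), q))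
        ∂S.jumpKernel x
      = liveWeight φ T (x, v) := by
  obtain ⟨t, u⟩ := v
  by_cases ht : t ≤ T
  · have hsplit : ∀ q : ℝ × E,
        liveWeight φ T (q.2, (t, u) + q.1 • (1, S.dvMap φ x)) + S.stopWeight φ T ((x, t, u), q)
          = ENNReal.ofReal (Real.exp u) * ENNReal.ofReal (Real.exp
            (if q.1 ≤ T - t then q.1 * S.dvMap φ x + φ q.2
              else (T - t) * S.dvMap φ x + φ x)) := fun q => by
      rw [← ENNReal.ofReal_mul (by positivity), ← Real.exp_add]
      by_cases hq : t + q.1 ≤ T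
      · simp [liveWeight, stopWeight, hq, not_lt.2 hq, le_sub_iff_add_le', add_assoc]
      · simp [liveWeight, stopWeight, hq, ht, not_le.1 hq, le_sub_iff_add_le', add_assoc]
    simp only [hsplit]
    rw [lintegral_const_mul' _ _ ENNReal.ofReal_ne_top,
      S.lintegral_jumpKernel_tilt φ hx (sub_nonneg.2 ht)]
    simp [liveWeight, ht, Real.exp_add, ENNReal.ofReal_mul (Real.exp_nonneg _)]
  · have hzero : ∀ᵐ q ∂S.jumpKernel x,
        liveWeight φ T (q.2, (t, u) + q.1 • (1, S.dvMap φ x)) + S.stopWeight φ T ((x, t, u), q)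
          = 0 := by
      filter_upwards [S.ae_jumpKernel_pos x] with q hq
      simp [liveWeight, stopWeight, ht, (not_le.1 ht).trans (lt_add_of_pos_right t hq)]
    rw [lintegral_congr_ae hzero]
    simp [liveWeight, ht]

/-- The weight `liveWeight` of the trajectory at its `n`-th jump. -/
def liveTerm (φ : C(E, ℝ)) (T : ℝ) (n : ℕ) (ω : Traj E) : ℝ≥0∞ :=
  liveWeight φ T (ω.1 n, Traj.additive (fun y => ((1 : ℝ), S.dvMap φ y)) n ω)

/-- The weight `stopWeight` of the `n`-th holding period of the trajectory. -/
def stopTerm (φ : C(E, ℝ)) (T : ℝ) (n : ℕ) (ω : Traj E) : ℝ≥0∞ :=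
  S.stopWeight φ T ((ω.1 n, Traj.additive (fun y => ((1 : ℝ), S.dvMap φ y)) n ω),
    ((ω.2 n).toReal, ω.1 (n + 1)))

lemma measurable_liveTerm (φ : C(E, ℝ)) (T : ℝ) (n : ℕ) : Measurable (S.liveTerm φ T n) := by
  have hA := Traj.measurable_additive (F := fun y => ((1 : ℝ), S.dvMap φ y)) (by fun_prop) n
  exact (measurable_liveWeight φ T).comp (by fun_prop)

lemma measurable_stopTerm (φ : C(E, ℝ)) (T : ℝ) (n : ℕ) : Measurable (S.stopTerm φ T n) := by
  have hA := Traj.measurable_additive (F := fun y => ((1 : ℝ), S.dvMap φ y)) (by fun_prop) n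
  exact (S.measurable_stopWeight φ T).comp (by fun_prop)

end ExponentialMartingale

end ChainSetting

namespace IsChainLaw

variable {E : Type*} [MeasurableSpace E] [TopologicalSpace E] [PolishSpace E] [CompactSpace E]
  [BorelSpace E] {S : ChainSetting E} {x : E} {P : Measure (Traj E)}

lemma lintegral_stopTerm_add_liveTerm (hP : IsChainLaw S.r S.skel x P) (hx : 0 < S.r x)
    (φ : C(E, ℝ)) (T : ℝ) (n : ℕ) :
    ∫⁻ ω, S.stopTerm φ T n ω ∂P + ∫⁻ ω, S.liveTerm φ T (n + 1) ω ∂P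
      = ∫⁻ ω, S.liveTerm φ T n ω ∂P := by
  have hlive := ChainSetting.measurable_liveWeight φ T
  have hjump := hP.lintegral_additive_jump hx (F := fun y => ((1 : ℝ), S.dvMap φ y))
    (by fun_prop) n
    (G := fun w => ChainSetting.liveWeight φ T (w.2.2, w.1.2 + w.2.1 • (1, S.dvMap φ w.1.1))
      + S.stopWeight φ T w)
    ((hlive.comp (by fun_prop)).add (S.measurable_stopWeight φ T))
  simp only [← Traj.additive_succ (fun y => ((1 : ℝ), S.dvMap φ y))] at hjump
  rw [add_comm, ← lintegral_add_left (S.measurable_liveTerm φ T (n + 1))]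
  refine hjump.trans (lintegral_congr_ae ?_)
  filter_upwards [hP.ae_r_pos hx n] with ω hω
  exact S.lintegral_liveWeight_add_stopWeight φ T hω _

lemma lintegral_liveTerm_zero_le (hP : IsChainLaw S.r S.skel x P) (φ : C(E, ℝ)) (T : ℝ) :
    ∫⁻ ω, S.liveTerm φ T 0 ω ∂P ≤ ENNReal.ofReal (Real.exp (φ x)) := by
  have hlive : Measurable fun y => ChainSetting.liveWeight φ T (y, 0) :=
    (ChainSetting.measurable_liveWeight φ T).comp (by fun_prop)
  have hlaw := lintegral_map (μ := P) hlive (g := fun ω => ω.1 0) (by fun_prop)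
  rw [hP.init, lintegral_dirac' _ hlive] at hlaw
  simp only [ChainSetting.liveTerm, Traj.additive_zero]
  rw [← hlaw, ChainSetting.liveWeight]
  split_ifs <;> simp

lemma lintegral_tsum_stopTerm_le (hP : IsChainLaw S.r S.skel x P) (hx : 0 < S.r x)
    (φ : C(E, ℝ)) (T : ℝ) :
    ∫⁻ ω, ∑' n, S.stopTerm φ T n ω ∂P ≤ ENNReal.ofReal (Real.exp (φ x)) := by
  rw [lintegral_tsum fun n => (S.measurable_stopTerm φ T n).aemeasurable]
  refine ENNReal.tsum_le_of_sum_range_le fun n => le_trans ?_ (hP.lintegral_liveTerm_zero_le φ T)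
  refine le_of_add_le_left (b := ∫⁻ ω, S.liveTerm φ T n ω ∂P) ?_
  induction n with
  | zero => simp
  | succ n ih => rwa [Finset.sum_range_succ, add_assoc, hP.lintegral_stopTerm_add_liveTerm hx]

lemma ae_exp_le_tsum_stopTerm (hP : IsChainLaw S.r S.skel x P) (hx : 0 < S.r x) (φ : C(E, ℝ))
    {T : ℝ} (hT : 0 < T) :
    ∀ᵐ ω ∂P, ENNReal.ofReal (Real.exp ((∫ t in 0..T, S.dvMap φ (Traj.pos t ω)) - ‖φ‖))
      ≤ ∑' n, S.stopTerm φ T n ω := by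
  filter_upwards [hP.ae_exists_lt_additive_one hx, hP.ae_holding_ne_top hx] with ω hexit hω
  obtain ⟨n, hnT, hTn⟩ := Traj.exists_additive_one_le_lt hT.le (hexit T)
  refine le_trans ?_ (ENNReal.le_tsum n)
  rw [Traj.integral_pos (S.dvMap φ) hT.le (n := n)
      (by simpa only [Traj.jumpTime_eq_ofReal_additive hω] using ENNReal.ofReal_le_ofReal hnT)
      (by simpa only [Traj.jumpTime_eq_ofReal_additive hω] using
        (ENNReal.ofReal_lt_ofReal_iff (hT.trans hTn)).2 hTn),
    Traj.jumpTime_eq_ofReal_additive hω, ENNReal.toReal_ofReal (Traj.additive_one_nonneg n ω),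
    smul_eq_mul]
  have hcond : Traj.additive (fun _ => (1 : ℝ)) n ω ≤ T
      ∧ T < Traj.additive (fun _ => (1 : ℝ)) n ω + (ω.2 n).toReal :=
    ⟨hnT, by simpa [Traj.additive_succ] using hTn⟩
  simp only [ChainSetting.stopTerm, ChainSetting.stopWeight, Traj.additive_prodMk, if_pos hcond]
  have hφ := neg_le_of_abs_le (φ.norm_coe_le_norm (ω.1 n))
  exact ENNReal.ofReal_le_ofReal (Real.exp_le_exp.2 (by linarith))

variable [Nonempty E]

lemma measure_lt_integral_dvMap_le (hP : IsChainLaw S.r S.skel x P) (hx : 0 < S.r x)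
    (φ : C(E, ℝ)) {T : ℝ} (hT : 0 < T) (a : ℝ) :
    P {ω | a < ∫ y, S.dvMap φ y ∂(toPM (empMeas T ω) : Measure E)}
      ≤ ENNReal.ofReal (Real.exp (2 * ‖φ‖ - a * T)) := by
  set b := ENNReal.ofReal (Real.exp (a * T - ‖φ‖)) with hb
  have hsub : P {ω | a < ∫ y, S.dvMap φ y ∂(toPM (empMeas T ω) : Measure E)}
      ≤ P {ω | b ≤ ∑' n, S.stopTerm φ T n ω} := by
    refine measure_mono_ae ?_
    filter_upwards [hP.ae_exp_le_tsum_stopTerm hx φ hT] with ω hω (ha : a < _)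
    rw [Traj.integral_toPM_empMeas hT, smul_eq_mul, lt_inv_mul_iff₀ hT, mul_comm] at ha
    exact (ENNReal.ofReal_le_ofReal (Real.exp_le_exp.2 (by linarith))).trans hω
  have hmarkov := meas_ge_le_lintegral_div (μ := P) (f := fun ω => ∑' n, S.stopTerm φ T n ω)
    (Measurable.tsum fun n => S.measurable_stopTerm φ T n).aemeasurable
    (ε := b) (by simp [hb, Real.exp_pos]) ENNReal.ofReal_ne_top
  refine hsub.trans (hmarkov.trans ?_)
  calc _ ≤ ENNReal.ofReal (Real.exp (φ x)) / b := by
        gcongr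
        exact hP.lintegral_tsum_stopTerm_le hx φ T
    _ = ENNReal.ofReal (Real.exp (φ x - (a * T - ‖φ‖))) := by
        rw [Real.exp_sub, ENNReal.ofReal_div_of_pos (Real.exp_pos _)]
    _ ≤ _ := by
        have hφ := le_of_abs_le (φ.norm_coe_le_norm x)
        exact ENNReal.ofReal_le_ofReal (Real.exp_le_exp.2 (by linarith))

end IsChainLaw

end UpperBound

section UpperBoundClosed

lemma one_div_mul_log_ofReal_mul_exp {K T : ℝ} (hK : 0 < K) (hT : 0 < T) (a : ℝ) :
    ((1 / T : ℝ) : EReal) * ENNReal.log (ENNReal.ofReal (K * Real.exp (-(a * T))))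
      = ((Real.log K / T - a : ℝ) : EReal) := by
  rw [ENNReal.log_ofReal_of_pos (by positivity), Real.log_mul hK.ne' (Real.exp_pos _).ne',
    Real.log_exp, ← EReal.coe_mul]
  congr 1
  field_simp
  ring

lemma tendsto_coe_div_sub (k a : ℝ) :
    Tendsto (fun T : ℝ => ((k / T - a : ℝ) : EReal)) atTop (𝓝 ((-a : ℝ) : EReal)) := by
  refine (continuous_coe_real_ereal.tendsto _).comp ?_
  simpa using (tendsto_const_nhds.div_atTop tendsto_id).sub_const a

lemma limsup_iSup_log_le {ι : Type*} {s : Set ι} {m : ℝ → ι → ℝ≥0∞} {K a : ℝ} (hK : 0 < K)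
    (hm : ∀ T > 0, ∀ i ∈ s, m T i ≤ ENNReal.ofReal (K * Real.exp (-(a * T)))) :
    limsup (fun T : ℝ => ⨆ i ∈ s, ((1 / T : ℝ) : EReal) * ENNReal.log (m T i)) atTop
      ≤ ((-a : ℝ) : EReal) := by
  rw [← (tendsto_coe_div_sub (Real.log K) a).limsup_eq]
  refine limsup_le_limsup ?_
  filter_upwards [eventually_gt_atTop 0] with T hT
  rw [← one_div_mul_log_ofReal_mul_exp hK hT]
  refine iSup₂_le fun i hi => mul_le_mul_of_nonneg_left (ENNReal.log_le_log (hm T hT i hi)) ?_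
  exact_mod_cast (one_div_pos.2 hT).le

lemma continuous_integral_probabilityMeasure {X : Type*} [TopologicalSpace X] [CompactSpace X]
    [MeasurableSpace X] [OpensMeasurableSpace X] (f : C(X, ℝ)) :
    Continuous fun ν : ProbabilityMeasure X => ∫ x, f x ∂(ν : Measure X) :=
  ProbabilityMeasure.continuous_integral_boundedContinuousFunction
    (BoundedContinuousFunction.mkOfCompact f)

namespace ChainSetting

section Convexity

variable {E : Type*} [MeasurableSpace E] [TopologicalSpace E] (S : ChainSetting E)

lemma muc_add_smul (μ₁ μ₂ : Measure E) (a b : ℝ≥0∞) :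
    S.muc (a • μ₁ + b • μ₂) = a • S.muc μ₁ + b • S.muc μ₂ := by
  have hprod : (a • μ₁ + b • μ₂).prod S.lam = a • μ₁.prod S.lam + b • μ₂.prod S.lam := by
    ext s hs
    simp only [Measure.prod_apply hs, Measure.add_apply, Measure.smul_apply, lintegral_add_measure,
      lintegral_smul_measure]
  simp only [muc, hprod, withDensity_add_measure, withDensity_smul_measure]

lemma Ihat0_add_smul_le (μ₁ μ₂ : Measure E) {a b : ℝ≥0∞} (hab : a + b = 1) :
    S.Ihat0 (a • μ₁ + b • μ₂) ≤ a * S.Ihat0 μ₁ + b * S.Ihat0 μ₂ := by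
  have ha' : a ≠ ∞ := ne_top_of_le_ne_top ENNReal.one_ne_top (hab ▸ le_self_add)
  have hb' : b ≠ ∞ := ne_top_of_le_ne_top ENNReal.one_ne_top (hab ▸ le_add_self)
  have hle : ∀ (μ : Measure E) (φ : C(E, ℝ)),
      ENNReal.ofReal (-∫ z : E × E, (Real.exp (φ z.2 - φ z.1) - 1) ∂S.muc μ) ≤ S.Ihat0 μ :=
    fun μ => le_iSup fun φ : C(E, ℝ) =>
      ENNReal.ofReal (-∫ z : E × E, (Real.exp (φ z.2 - φ z.1) - 1) ∂S.muc μ)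
  refine iSup_le fun φ => ?_
  rw [muc_add_smul]
  by_cases hint : Integrable (fun z : E × E => Real.exp (φ z.2 - φ z.1) - 1)
      (a • S.muc μ₁ + b • S.muc μ₂)
  · obtain ⟨h₁, h₂⟩ := integrable_add_measure.1 hint
    rw [integral_add_measure h₁ h₂, integral_smul_measure, integral_smul_measure, neg_add,
      smul_eq_mul, smul_eq_mul, ← mul_neg, ← mul_neg]
    refine ENNReal.ofReal_add_le.trans ?_
    rw [ENNReal.ofReal_mul ENNReal.toReal_nonneg, ENNReal.ofReal_mul ENNReal.toReal_nonneg,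
      ENNReal.ofReal_toReal ha', ENNReal.ofReal_toReal hb']
    gcongr <;> exact hle _ φ
  · simp [integral_undef hint]

end Convexity

variable {E : Type*} [MeasurableSpace E] [TopologicalSpace E] [PolishSpace E] [CompactSpace E]
  [BorelSpace E] (S : ChainSetting E)

lemma exists_lt_integral_dvMap (μ : Measure E) [IsProbabilityMeasure μ] {c : ℝ}
    (hc : (c : EReal) < S.Ihat0 μ) : ∃ φ : C(E, ℝ), c < ∫ y, S.dvMap φ y ∂μ := by
  rcases lt_or_ge c 0 with hneg | hnonneg
  · refine ⟨0, ?_⟩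
    have hzero : ∀ y, S.dvMap 0 y = 0 := fun y => by simp [dvMap_apply, skelOp_apply, expMap]
    simpa [hzero] using hneg
  · rw [← max_eq_left hnonneg, ← EReal.coe_ennreal_ofReal, EReal.coe_ennreal_lt_coe_ennreal_iff,
      Ihat0_eq_iSup, lt_iSup_iff] at hc
    obtain ⟨φ, hφ⟩ := hc
    exact ⟨φ, (ENNReal.ofReal_lt_ofReal_iff_of_nonneg hnonneg).1 hφ⟩

variable [Nonempty E]

lemma exists_measure_toPM_empMeas_mem_le {C : Set (ProbabilityMeasure E)} (hC : IsClosed C)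
    {a : ℝ} (ha : ∀ μ ∈ C, (a : EReal) < S.Ihat0 (μ : Measure E)) :
    ∃ K > 0, ∀ (x : E) (P : Measure (Traj E)), IsChainLaw S.r S.skel x P → 0 < S.r x →
      ∀ T > 0, P {ω | toPM (empMeas T ω) ∈ C} ≤ ENNReal.ofReal (K * Real.exp (-(a * T))) := by
  obtain ⟨t, ht⟩ := hC.isCompact.elim_finite_subcover
    (fun φ : C(E, ℝ) => {ν : ProbabilityMeasure E | a < ∫ y, S.dvMap φ y ∂(ν : Measure E)})
    (fun φ => isOpen_lt continuous_const (continuous_integral_probabilityMeasure _))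
    (fun μ hμ => mem_iUnion.2 (S.exists_lt_integral_dvMap _ (ha μ hμ)))
  refine ⟨1 + ∑ φ ∈ t, Real.exp (2 * ‖φ‖), by positivity, fun x P hP hx T hT => ?_⟩
  calc P {ω | toPM (empMeas T ω) ∈ C}
      ≤ P (⋃ φ ∈ t, {ω | a < ∫ y, S.dvMap φ y ∂(toPM (empMeas T ω) : Measure E)}) :=
        measure_mono fun ω hω => by simpa using ht hω
    _ ≤ ∑ φ ∈ t, P {ω | a < ∫ y, S.dvMap φ y ∂(toPM (empMeas T ω) : Measure E)} :=
        measure_biUnion_finset_le _ _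
    _ ≤ ∑ φ ∈ t, ENNReal.ofReal (Real.exp (2 * ‖φ‖ - a * T)) :=
        Finset.sum_le_sum fun φ _ => hP.measure_lt_integral_dvMap_le hx φ hT a
    _ = ENNReal.ofReal ((∑ φ ∈ t, Real.exp (2 * ‖φ‖)) * Real.exp (-(a * T))) := by
        rw [← ENNReal.ofReal_sum_of_nonneg fun _ _ => (Real.exp_pos _).le, Finset.sum_mul]
        simp only [sub_eq_add_neg, Real.exp_add]
    _ ≤ _ := by
        gcongr
        exact le_add_of_nonneg_left zero_le_one

theorem limsup_log_measure_toPM_empMeas_le (P : E → Measure (Traj E))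
    (hP : ∀ x, IsChainLaw S.r S.skel x (P x)) {E₁ : Set E} (hE₁ : E₁ ⊆ S.E0ᶜ)
    {C : Set (ProbabilityMeasure E)} (hC : IsClosed C) :
    limsup (fun T : ℝ => ⨆ x ∈ E₁,
        ((1 / T : ℝ) : EReal) * ENNReal.log (P x {ω : Traj E | toPM (empMeas T ω) ∈ C})) atTop
      ≤ -(⨅ μ ∈ C, (S.Ihat0 (μ : Measure E) : EReal)) := by
  rw [EReal.le_neg]
  refine EReal.ge_of_forall_gt_iff_ge.1 fun a ha => ?_
  obtain ⟨K, hK, hbound⟩ := S.exists_measure_toPM_empMeas_mem_le hC fun μ hμ =>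
    ha.trans_le (iInf₂_le μ hμ)
  rw [EReal.le_neg]
  exact limsup_iSup_log_le hK fun T hT x hx =>
    hbound x (P x) (hP x) ((S.r_nonneg x).lt_of_ne fun h => hE₁ hx h.symm) T hT

end ChainSetting

end UpperBoundClosed

section MeanLaw

/-- A sequence of subprobability measures on a vector space that is supermultiplicative for
convolution. -/
structure IsConvSupermul {V : Type*} [AddMonoid V] [MeasurableSpace V] (M : ℕ → Measure V) :
    Prop where
  zero_singleton_ne_zero : M 0 {0} ≠ 0
  univ_le : ∀ n, M n univ ≤ 1
  conv_le : ∀ n m, (M n).conv (M m) ≤ M (n + m)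

namespace IsConvSupermul

variable {V : Type*} [AddMonoid V] [MeasurableSpace V] {M : ℕ → Measure V}

lemma isFiniteMeasure (hM : IsConvSupermul M) (n : ℕ) : IsFiniteMeasure (M n) :=
  ⟨(hM.univ_le n).trans_lt one_lt_top⟩

lemma mul_le [MeasurableAdd₂ V] (hM : IsConvSupermul M) (n m : ℕ) {B B' B'' : Set V}
    (hB'' : MeasurableSet B'') (hB : ∀ b ∈ B, ∀ b' ∈ B', b + b' ∈ B'') :
    M n B * M m B' ≤ M (n + m) B'' := by
  have := hM.isFiniteMeasure m
  refine le_trans ?_ (hM.conv_le n m B'')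
  rw [Measure.conv, Measure.map_apply measurable_add hB'', ← Measure.prod_prod]
  exact measure_mono fun b hb => hB _ hb.1 _ hb.2

end IsConvSupermul

namespace ChainSetting

section Minorization

variable {E : Type*} [MeasurableSpace E] [TopologicalSpace E] [CompactSpace E] (S : ChainSetting E)

lemma exists_le_p : ∃ c : ℝ, 0 < c ∧ c ≤ 1 ∧ ∀ x y, c ≤ S.p x y := by
  rcases isEmpty_or_nonempty E with hE | hE
  · exact ⟨1, one_pos, le_rfl, fun x => hE.elim x⟩
  obtain ⟨z, -, hz⟩ := isCompact_univ.exists_isMinOn univ_nonempty S.p_cont.continuousOn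
  exact ⟨min (S.p z.1 z.2) 1, lt_min (S.p_pos _ _) one_pos, min_le_right _ _,
    fun x y => (min_le_left _ _).trans (hz (mem_univ (x, y)))⟩

end Minorization

variable {E : Type*} [MeasurableSpace E] [TopologicalSpace E] (S : ChainSetting E)

lemma smul_lam_le_skel {c : ℝ} (hc : ∀ x y, c ≤ S.p x y) (x : E) :
    ENNReal.ofReal c • S.lam ≤ S.skel x := by
  rw [skel, ← withDensity_const]
  exact withDensity_mono (ae_of_all _ fun y => ENNReal.ofReal_le_ofReal (hc x y))

section MeanLawDef

variable {V : Type*} [NormedAddCommGroup V] [NormedSpace ℝ V] [MeasurableSpace V] (F : C(E, V))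

/-- The law of `Traj.additive F n` when the chain starts from `lam`. -/
def meanLaw (n : ℕ) : Measure V := (S.lam.bind fun x => (S.addKernel F ^ n) (x, 0)).snd

lemma lintegral_meanLaw (n : ℕ) {f : V → ℝ≥0∞} (hf : Measurable f) :
    ∫⁻ v, f v ∂S.meanLaw F n = ∫⁻ x, ∫⁻ w, f w.2 ∂(S.addKernel F ^ n) (x, 0) ∂S.lam := by
  rw [meanLaw, Measure.snd, lintegral_map hf measurable_snd, Measure.lintegral_bind]
  · exact ((S.addKernel F ^ n).measurable.comp measurable_prodMk_right).aemeasurable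
  · exact (hf.comp measurable_snd).aemeasurable

lemma meanLaw_zero : S.meanLaw F 0 = Measure.dirac 0 := by
  refine Measure.ext_of_lintegral _ fun f hf => ?_
  rw [S.lintegral_meanLaw F 0 hf, lintegral_dirac' _ hf]
  have hzero (x : E) : ∫⁻ w, f w.2 ∂(1 : Kernel (E × V) (E × V)) (x, 0) = f 0 :=
    lintegral_dirac' _ (hf.comp measurable_snd)
  simp [hzero]

end MeanLawDef

variable [BorelSpace E]

section Translation

variable {V : Type*} [NormedAddCommGroup V] [NormedSpace ℝ V] [MeasurableSpace V]
  [BorelSpace V] [SecondCountableTopology V] (F : C(E, V))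

lemma addKernel_apply (z : E × V) :
    S.addKernel F z = (S.jumpKernel z.1).map fun q => (q.2, z.2 + q.1 • F z.1) :=
  Measure.ext_of_lintegral _ fun h hh => by
    rw [S.lintegral_addKernel F hh, lintegral_map hh (by fun_prop)]

lemma lintegral_addKernel_pow_translate (n : ℕ) {h : E × V → ℝ≥0∞} (hh : Measurable h) (x : E)
    (u v : V) : ∫⁻ w, h (w.1, w.2 + v) ∂(S.addKernel F ^ n) (x, u)
      = ∫⁻ w, h w ∂(S.addKernel F ^ n) (x, u + v) := by
  induction n generalizing h with
  | zero =>
    exact (lintegral_dirac' _ (by fun_prop)).trans (lintegral_dirac' _ hh).symm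
  | succ n ih =>
    rw [lintegral_kernel_pow_succ _ n hh, lintegral_kernel_pow_succ _ n (by fun_prop),
      ← ih hh.lintegral_kernel]
    refine lintegral_congr fun w => ?_
    rw [S.lintegral_addKernel F (by fun_prop), S.lintegral_addKernel F hh]
    simp only [add_right_comm]

lemma lintegral_meanLaw_add (n : ℕ) {f : V → ℝ≥0∞} (hf : Measurable f) (v : V) :
    ∫⁻ v', f (v + v') ∂S.meanLaw F n
      = ∫⁻ y, ∫⁻ w, f w.2 ∂(S.addKernel F ^ n) (y, v) ∂S.lam := by
  rw [S.lintegral_meanLaw F n (by fun_prop)]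
  refine lintegral_congr fun y => ?_
  simpa only [Function.comp_apply, add_comm, add_zero] using
    S.lintegral_addKernel_pow_translate F n (hf.comp measurable_snd) y 0 v

lemma ae_meanLaw_mem {C : Set V} (hC : MeasurableSet C) (hC₀ : 0 ∈ C)
    (hadd : ∀ v ∈ C, ∀ x, ∀ s : ℝ, 0 < s → v + s • F x ∈ C) (n : ℕ) :
    ∀ᵐ v ∂S.meanLaw F n, v ∈ C := by
  have hC' : MeasurableSet {w : E × V | w.2 ∈ C} := measurable_snd hC
  have hpow (x : E) : ∀ᵐ w ∂(S.addKernel F ^ n) (x, 0), w.2 ∈ C := by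
    induction n with
    | zero => exact (ae_dirac_iff hC').2 hC₀
    | succ n ih =>
      rw [pow_succ']
      refine Kernel.ae_comp_of_ae_ae hC' ?_
      filter_upwards [ih] with w hw
      rw [S.addKernel_apply F, ae_map_iff (by fun_prop) hC']
      filter_upwards [S.ae_jumpKernel_pos w.1] with q hq
      exact hadd _ hw _ _ hq
  have hzero (x : E) : ∫⁻ w, Cᶜ.indicator 1 w.2 ∂(S.addKernel F ^ n) (x, 0) = (0 : ℝ≥0∞) := by
    refine (lintegral_congr_ae ?_).trans lintegral_zero
    filter_upwards [hpow x] with w hw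
    exact indicator_of_notMem (notMem_compl_iff.2 hw) _
  change S.meanLaw F n Cᶜ = 0
  rw [← lintegral_indicator_one hC.compl,
    S.lintegral_meanLaw F n (measurable_one.indicator hC.compl)]
  simp only [hzero, lintegral_zero]

end Translation

variable [SecondCountableTopology E]

lemma jumpKernel_univ_le (x : E) : S.jumpKernel x univ ≤ 1 := by
  have hmass := S.lintegral_jumpKernel_fst x (g := fun _ => 1) measurable_const
  simp only [lintegral_one, mul_one] at hmass
  rw [hmass]
  rcases (S.r_nonneg x).eq_or_lt with hr | hr
  · simp [← hr]
  · simp [lintegral_Ioi_ofReal_mul_exp_neg hr]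

variable {V : Type*} [NormedAddCommGroup V] [NormedSpace ℝ V] [MeasurableSpace V]
  [BorelSpace V] [SecondCountableTopology V] (F : C(E, V))

lemma addKernel_pow_univ_le (n : ℕ) (z : E × V) : (S.addKernel F ^ n) z univ ≤ 1 := by
  simp_rw [← lintegral_one]
  induction n with
  | zero => exact (lintegral_dirac' z measurable_const).le
  | succ n ih =>
    rw [lintegral_kernel_pow_succ _ n measurable_const]
    refine le_trans (lintegral_mono fun w => ?_) ih
    rw [S.lintegral_addKernel F measurable_const, lintegral_one]
    exact S.jumpKernel_univ_le w.1

lemma mul_lintegral_lam_le_addKernel {c : ℝ} (hc : ∀ x y, c ≤ S.p x y)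
    {h : E × V → ℝ≥0∞} (hh : Measurable h) (z : E × V) :
    ENNReal.ofReal c * ∫⁻ w, ∫⁻ y, h (y, w.2) ∂S.lam ∂S.addKernel F z
      ≤ ∫⁻ w, h w ∂S.addKernel F z := by
  have : Measurable fun v => ∫⁻ y, h (y, v) ∂S.lam := hh.lintegral_prod_left'
  rw [S.lintegral_addKernel F hh,
    S.lintegral_addKernel F (h := fun w => ∫⁻ y, h (y, w.2) ∂S.lam) (by fun_prop),
    S.lintegral_jumpKernel_fst z.1 (g := fun s => ∫⁻ y, h (y, z.2 + s • F z.1) ∂S.lam)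
      (by fun_prop),
    S.lintegral_jumpKernel z.1 (by fun_prop), ← lintegral_const_mul' _ _ ofReal_ne_top]
  refine lintegral_mono fun s => ?_
  rw [mul_left_comm, ← smul_eq_mul (ENNReal.ofReal c), ← lintegral_smul_measure]
  gcongr
  exact S.smul_lam_le_skel hc z.1

lemma mul_lintegral_lam_le_addKernel_pow {c : ℝ} (hc₁ : c ≤ 1) (hc : ∀ x y, c ≤ S.p x y) (n : ℕ)
    {h : E × V → ℝ≥0∞} (hh : Measurable h) :
    ENNReal.ofReal c * ∫⁻ v, ∫⁻ y, h (y, v) ∂S.lam ∂S.meanLaw F n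
      ≤ ∫⁻ x, ∫⁻ w, h w ∂(S.addKernel F ^ n) (x, 0) ∂S.lam := by
  have hlam : Measurable fun v => ∫⁻ y, h (y, v) ∂S.lam := hh.lintegral_prod_left'
  cases n with
  | zero =>
    have hzero (x : E) : ∫⁻ w, h w ∂(S.addKernel F ^ 0) (x, 0) = h (x, 0) :=
      lintegral_dirac' _ hh
    simp only [S.meanLaw_zero, lintegral_dirac' _ hlam, hzero]
    exact mul_le_of_le_one_left' (ofReal_le_one.2 hc₁)
  | succ n =>
    rw [S.lintegral_meanLaw F _ hlam, ← lintegral_const_mul' _ _ ofReal_ne_top]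
    refine lintegral_mono fun x => ?_
    rw [lintegral_kernel_pow_succ _ n hh, lintegral_kernel_pow_succ _ n (by fun_prop),
      ← lintegral_const_mul' _ _ ofReal_ne_top]
    exact lintegral_mono fun w => S.mul_lintegral_lam_le_addKernel F hc hh w

lemma meanLaw_univ_le (n : ℕ) : S.meanLaw F n univ ≤ 1 := by
  rw [← lintegral_one, S.lintegral_meanLaw F n measurable_const]
  calc _ ≤ ∫⁻ _, 1 ∂S.lam := lintegral_mono fun x => by
        simpa using S.addKernel_pow_univ_le F n (x, 0)
    _ = 1 := by simp

instance isFiniteMeasure_meanLaw (n : ℕ) : IsFiniteMeasure (S.meanLaw F n) :=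
  ⟨(S.meanLaw_univ_le F n).trans_lt one_lt_top⟩

-- A transition density bounded below makes the chain regenerate from `lam` at every step.
lemma smul_conv_meanLaw_le {c : ℝ} (hc₁ : c ≤ 1) (hc : ∀ x y, c ≤ S.p x y) (n m : ℕ) :
    ENNReal.ofReal c • (S.meanLaw F n).conv (S.meanLaw F m) ≤ S.meanLaw F (n + m) := by
  refine Measure.le_iff.2 fun s hs => ?_
  let f : V → ℝ≥0∞ := s.indicator 1
  have hf : Measurable f := measurable_one.indicator hs
  have hfm : Measurable fun w : E × V => ∫⁻ w', f w'.2 ∂(S.addKernel F ^ m) w :=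
    (hf.comp measurable_snd).lintegral_kernel
  have hpow (z : E × V) : ∫⁻ w, f w.2 ∂(S.addKernel F ^ (n + m)) z
      = ∫⁻ w, ∫⁻ w', f w'.2 ∂(S.addKernel F ^ m) w ∂(S.addKernel F ^ n) z := by
    rw [add_comm, pow_add]
    exact Kernel.lintegral_comp _ _ _ (hf.comp measurable_snd)
  rw [Measure.smul_apply, smul_eq_mul, ← lintegral_indicator_one hs, ← lintegral_indicator_one hs,
    Measure.lintegral_conv hf, S.lintegral_meanLaw F _ hf]
  simp only [hpow, S.lintegral_meanLaw_add F m hf]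
  exact S.mul_lintegral_lam_le_addKernel_pow F hc₁ hc n hfm

lemma isConvSupermul_smul_meanLaw {c : ℝ} (hc₀ : 0 < c) (hc₁ : c ≤ 1) (hc : ∀ x y, c ≤ S.p x y) :
    IsConvSupermul fun n => ENNReal.ofReal c • S.meanLaw F n where
  zero_singleton_ne_zero := by simp [S.meanLaw_zero, hc₀]
  univ_le n := mul_le_one' (ofReal_le_one.2 hc₁) (S.meanLaw_univ_le F n)
  conv_le n m := by
    rw [Measure.conv_smul_left, Measure.conv_smul_right]
    gcongr
    exact S.smul_conv_meanLaw_le F hc₁ hc n m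

end ChainSetting

end MeanLaw

section DivisibleHull

variable {W : Type*} [AddCommGroup W] [Module ℝ W]

/-- The set of all `w` having a positive integer multiple in `K`. -/
def divisibleHull (K : Set W) : Set W := {w | ∃ N : ℕ, 0 < N ∧ (N : ℝ) • w ∈ K}

lemma subset_divisibleHull (K : Set W) : K ⊆ divisibleHull K :=
  fun k hk => ⟨1, one_pos, by simpa using hk⟩

variable {K : Set W}

lemma natCast_smul_mem_of_add_mem (hadd : ∀ a ∈ K, ∀ b ∈ K, a + b ∈ K) {n : ℕ} (hn : 0 < n) {k : W}
    (hk : k ∈ K) : (n : ℝ) • k ∈ K := by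
  induction n, hn using Nat.le_induction with
  | base => simpa using hk
  | succ n _ ih =>
    rw [Nat.cast_succ, add_smul, one_smul]
    exact hadd _ ih _ hk

lemma add_mem_divisibleHull (hadd : ∀ a ∈ K, ∀ b ∈ K, a + b ∈ K) {a b : W}
    (ha : a ∈ divisibleHull K) (hb : b ∈ divisibleHull K) : a + b ∈ divisibleHull K := by
  obtain ⟨N, hN, ha⟩ := ha
  obtain ⟨M, hM, hb⟩ := hb
  refine ⟨N * M, Nat.mul_pos hN hM, ?_⟩
  have hsum := hadd _ (natCast_smul_mem_of_add_mem hadd hM ha) _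
    (natCast_smul_mem_of_add_mem hadd hN hb)
  rwa [smul_smul, smul_smul, mul_comm (M : ℝ), ← smul_add, ← Nat.cast_mul] at hsum

lemma ratCast_smul_mem_divisibleHull (hadd : ∀ a ∈ K, ∀ b ∈ K, a + b ∈ K) {q : ℚ} (hq : 0 < q)
    {a : W} (ha : a ∈ divisibleHull K) : (q : ℝ) • a ∈ divisibleHull K := by
  obtain ⟨N, hN, ha⟩ := ha
  obtain ⟨m, hm⟩ := Int.eq_ofNat_of_zero_le (Rat.num_pos.2 hq).le
  have hm₀ : 0 < m := by
    have := Rat.num_pos.2 hq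
    omega
  refine ⟨N * q.den, Nat.mul_pos hN q.den_pos, ?_⟩
  convert natCast_smul_mem_of_add_mem hadd hm₀ ha using 1
  rw [smul_smul, smul_smul, Rat.cast_def, hm]
  have := q.den_ne_zero
  push_cast
  field_simp

end DivisibleHull

section Separation

variable {W : Type*} [NormedAddCommGroup W] [NormedSpace ℝ W] {K : Set W}

lemma smul_mem_closure_divisibleHull (hadd : ∀ a ∈ K, ∀ b ∈ K, a + b ∈ K) {t : ℝ} (ht : 0 < t)
    {w : W} (hw : w ∈ closure (divisibleHull K)) : t • w ∈ closure (divisibleHull K) := by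
  have ht' : t ∈ closure (Ioi 0 ∩ range ((↑) : ℚ → ℝ)) :=
    Rat.denseRange_cast.open_subset_closure_inter isOpen_Ioi ht
  refine map_mem_closure₂ (f := fun (t : ℝ) (w : W) => t • w) continuous_smul ht' hw ?_
  rintro _ ⟨hq, q, rfl⟩ w hw
  exact ratCast_smul_mem_divisibleHull hadd (Rat.cast_pos.1 (mem_Ioi.1 hq)) hw

lemma convex_closure_divisibleHull (hadd : ∀ a ∈ K, ∀ b ∈ K, a + b ∈ K) :
    Convex ℝ (closure (divisibleHull K)) :=
  convex_iff_forall_pos.2 fun _ hx _ hy _ _ ha hb _ =>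
    map_mem_closure₂ continuous_add (smul_mem_closure_divisibleHull hadd ha hx)
      (smul_mem_closure_divisibleHull hadd hb hy) fun _ h _ h' => add_mem_divisibleHull hadd h h'

lemma exists_clm_nonpos_of_notMem_closure (hne : K.Nonempty)
    (hadd : ∀ a ∈ K, ∀ b ∈ K, a + b ∈ K) {p : W} (hp : p ∉ closure (divisibleHull K)) :
    ∃ f : W →L[ℝ] ℝ, (∀ k ∈ K, f k ≤ 0) ∧ 0 < f p := by
  obtain ⟨f, u, hf, hu⟩ :=
    geometric_hahn_banach_closed_point (convex_closure_divisibleHull hadd) isClosed_closure hp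
  have hmul {t : ℝ} (ht : 0 < t) {k : W} (hk : k ∈ K) : t * f k < u := by
    have := hf _ (smul_mem_closure_divisibleHull hadd ht
      (subset_closure (subset_divisibleHull K hk)))
    rwa [map_smul] at this
  refine ⟨f, fun k hk => ?_, ?_⟩
  · by_contra! hpos
    have hu₀ : u < (|u| + 1) / f k * f k := by
      rw [div_mul_cancel₀ _ hpos.ne']
      linarith [le_abs_self u]
    exact (hmul (by positivity) hk).not_gt hu₀
  · obtain ⟨k, hk⟩ := hne
    have hlim : Tendsto (fun t : ℝ => t * f k) (𝓝[>] 0) (𝓝 0) :=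
      ((continuous_mul_const (f k)).tendsto' 0 0 (zero_mul _)).mono_left nhdsWithin_le_nhds
    exact (le_of_tendsto hlim (eventually_mem_nhdsWithin.mono fun _ ht => (hmul ht hk).le)).trans_lt
      hu

lemma exists_clm_le_snd_of_nonpos {K : Set (W × ℝ)} {f : W × ℝ →L[ℝ] ℝ} (hf : ∀ k ∈ K, f k ≤ 0)
    (hK : ∀ k ∈ K, 0 ≤ k.2) {t : ℝ} (ht : 0 < t) (ht' : (0, t) ∈ K) {v : W} {h : ℝ}
    (hvh : 0 < f (v, h)) : ∃ l : W →L[ℝ] ℝ, h < l v ∧ ∀ k ∈ K, l k.1 ≤ k.2 := by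
  set β := f (0, 1) with hβ
  have hsplit (w : W) (s : ℝ) : f (w, s) = f (w, 0) + s * β := by
    rw [hβ, ← smul_eq_mul, ← map_smul, ← map_add]
    simp
  have hβ₀ : β ≤ 0 := by
    have hneg := hf _ ht'
    rw [hsplit, Prod.mk_zero_zero, map_zero, zero_add] at hneg
    exact nonpos_of_mul_nonpos_right hneg ht
  -- A small slope `δ` makes the hyperplane non-vertical without losing the point `(v, h)`.
  obtain ⟨δ, hδ, hδh⟩ : ∃ δ > 0, δ * h < f (v, h) := by
    refine ⟨f (v, h) / (|h| + 1), by positivity, ?_⟩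
    rw [div_mul_eq_mul_div, div_lt_iff₀ (by positivity)]
    gcongr
    linarith [le_abs_self h]
  have hγ : 0 < δ - β := by linarith
  refine ⟨(δ - β)⁻¹ • f.comp (ContinuousLinearMap.inl ℝ W ℝ), ?_, fun k hk => ?_⟩
  · change h < (δ - β)⁻¹ * f (v, 0)
    rw [lt_inv_mul_iff₀ hγ]
    linarith [hsplit v h]
  · change (δ - β)⁻¹ * f (k.1, 0) ≤ k.2
    rw [inv_mul_le_iff₀ hγ]
    linarith [hf k hk, hsplit k.1 k.2, mul_nonneg hδ.le (hK k hk)]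

end Separation

section RateSet

variable {V : Type*} [NormedAddCommGroup V] [NormedSpace ℝ V] [MeasurableSpace V]

/-- The pairs `(v, a)` such that some `M n` gives mass at least `exp (-a)` to the ball centred at
`v` whose radius `η * τ v` is proportional to the duration `τ v`. -/
def rateSet (M : ℕ → Measure V) (τ : V →L[ℝ] ℝ) (η : ℝ) : Set (V × ℝ) :=
  {q | ∃ n, ENNReal.ofReal (Real.exp (-q.2)) ≤ M n (Metric.closedBall q.1 (η * τ q.1))}

namespace IsConvSupermul

variable {M : ℕ → Measure V} (τ : V →L[ℝ] ℝ) (η : ℝ)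

lemma snd_nonneg_of_mem_rateSet (hM : IsConvSupermul M) {q : V × ℝ} (hq : q ∈ rateSet M τ η) :
    0 ≤ q.2 := by
  obtain ⟨n, hn⟩ := hq
  have hle := (hn.trans (measure_mono (subset_univ _))).trans (hM.univ_le n)
  rwa [ENNReal.ofReal_le_one, Real.exp_le_one_iff, neg_nonpos] at hle

lemma exists_zero_mem_rateSet (hM : IsConvSupermul M) : ∃ t > 0, (0, t) ∈ rateSet M τ η := by
  have htop : M 0 {0} ≠ ∞ := have := hM.isFiniteMeasure 0; measure_ne_top _ _
  have hpos : 0 < (M 0 {0}).toReal := ENNReal.toReal_pos hM.zero_singleton_ne_zero htop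
  refine ⟨max 1 (-Real.log (M 0 {0}).toReal), by positivity, 0, ?_⟩
  have hlog : -max 1 (-Real.log (M 0 {0}).toReal) ≤ Real.log (M 0 {0}).toReal :=
    neg_le.1 (le_max_right _ _)
  calc _ ≤ M 0 {0} := ENNReal.ofReal_le_of_le_toReal ((Real.le_log_iff_exp_le hpos).1 hlog)
    _ ≤ _ := measure_mono (by simp)

variable [BorelSpace V] [SecondCountableTopology V]

lemma add_mem_rateSet (hM : IsConvSupermul M) {q q' : V × ℝ} (hq : q ∈ rateSet M τ η)
    (hq' : q' ∈ rateSet M τ η) : q + q' ∈ rateSet M τ η := by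
  obtain ⟨n, hn⟩ := hq
  obtain ⟨m, hm⟩ := hq'
  refine ⟨n + m, ?_⟩
  calc ENNReal.ofReal (Real.exp (-(q + q').2))
      = ENNReal.ofReal (Real.exp (-q.2)) * ENNReal.ofReal (Real.exp (-q'.2)) := by
        rw [← ENNReal.ofReal_mul (Real.exp_pos _).le, ← Real.exp_add, Prod.snd_add, neg_add]
    _ ≤ M n (Metric.closedBall q.1 (η * τ q.1)) * M m (Metric.closedBall q'.1 (η * τ q'.1)) :=
        mul_le_mul' hn hm
    _ ≤ _ := hM.mul_le n m Metric.isClosed_closedBall.measurableSet fun b hb b' hb' => by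
        rw [mem_closedBall_iff_norm] at *
        rw [Prod.fst_add, map_add, mul_add, add_sub_add_comm]
        exact norm_add_le_of_le hb hb'

lemma exists_clm_of_notMem_closure (hM : IsConvSupermul M) {v : V} {h : ℝ}
    (hvh : (v, h) ∉ closure (divisibleHull (rateSet M τ η))) :
    ∃ l : V →L[ℝ] ℝ, h < l v ∧
      ∀ n w, M n (Metric.closedBall w (η * τ w)) ≤ ENNReal.ofReal (Real.exp (-l w)) := by
  obtain ⟨t, ht, ht'⟩ := hM.exists_zero_mem_rateSet τ η
  obtain ⟨f, hf, hfvh⟩ := exists_clm_nonpos_of_notMem_closure ⟨_, ht'⟩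
    (fun q hq q' hq' => hM.add_mem_rateSet τ η hq hq') hvh
  obtain ⟨l, hl, hlK⟩ := exists_clm_le_snd_of_nonpos hf
    (fun q hq => hM.snd_nonneg_of_mem_rateSet τ η hq) ht ht' hfvh
  refine ⟨l, hl, fun n w => ?_⟩
  set a := M n (Metric.closedBall w (η * τ w))
  rcases eq_or_ne a 0 with ha₀ | ha₀
  · simp [ha₀]
  have ha_top : a ≠ ∞ := have := hM.isFiniteMeasure n; measure_ne_top _ _
  have hpos : 0 < a.toReal := ENNReal.toReal_pos ha₀ ha_top
  have hmem : (w, -Real.log a.toReal) ∈ rateSet M τ η := by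
    refine ⟨n, ?_⟩
    rw [neg_neg, Real.exp_log hpos, ENNReal.ofReal_toReal ha_top]
  rw [← ENNReal.ofReal_toReal ha_top]
  refine ENNReal.ofReal_le_ofReal ((Real.log_le_iff_le_exp hpos).1 ?_)
  exact le_neg_of_le_neg (hlK _ hmem)

end IsConvSupermul

end RateSet

section ExponentialMoment

lemma exp_mul_measure_closedBall_le {V : Type*} [NormedAddCommGroup V] [NormedSpace ℝ V]
    [MeasurableSpace V] (τ l : V →L[ℝ] ℝ) {M : Measure V} {η η' : ℝ} (hη : η' ≤ η)
    (hM : ∀ w, M (Metric.closedBall w (η * τ w)) ≤ ENNReal.ofReal (Real.exp (-l w)))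
    {a : V} (ha : τ a = 1) {c : ℝ} (j : ℕ) :
    ENNReal.ofReal (Real.exp (l ((j + 1 : ℝ) • a) + c))
        * M (Metric.closedBall ((j + 1 : ℝ) • a) (η' * (j + 1)))
      ≤ ENNReal.ofReal (Real.exp c) := by
  have hτ : τ ((j + 1 : ℝ) • a) = j + 1 := by rw [map_smul, ha, smul_eq_mul, mul_one]
  have hsub : Metric.closedBall ((j + 1 : ℝ) • a) (η' * (j + 1))
      ⊆ Metric.closedBall ((j + 1 : ℝ) • a) (η * τ ((j + 1 : ℝ) • a)) := by
    rw [hτ]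
    exact Metric.closedBall_subset_closedBall (by gcongr)
  calc _ ≤ ENNReal.ofReal (Real.exp (l ((j + 1 : ℝ) • a) + c))
        * ENNReal.ofReal (Real.exp (-l ((j + 1 : ℝ) • a))) := by
        gcongr
        exact (measure_mono hsub).trans (hM _)
    _ = _ := by
        rw [← ENNReal.ofReal_mul (Real.exp_pos _).le, ← Real.exp_add]
        ring_nf

variable {V : Type*} [NormedAddCommGroup V] [NormedSpace ℝ V] [FiniteDimensional ℝ V]
  (τ : V →L[ℝ] ℝ) {R : ℝ}

lemma exists_finset_cone_cover (R : ℝ) {η : ℝ} (hη : 0 < η) :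
    ∃ (t : Finset V) (J : ℝ), (∀ a ∈ t, τ a = 1) ∧ ∀ v, ‖v‖ ≤ R * τ v → J < τ v →
      ∃ a ∈ t, ∃ j : ℕ, j ≤ τ v ∧ ‖v - (j + 1 : ℝ) • a‖ ≤ η * (j + 1) := by
  have hcompact : IsCompact {u : V | τ u = 1 ∧ ‖u‖ ≤ R} :=
    (isCompact_closedBall (0 : V) R).of_isClosed_subset
      ((isClosed_eq τ.continuous continuous_const).inter
        (isClosed_le continuous_norm continuous_const)) fun u hu => by simpa using hu.2
  obtain ⟨t, htK, ht, hcov⟩ := hcompact.finite_cover_balls (e := η / 2) (by positivity)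
  refine ⟨ht.toFinset, max 1 (2 * R / η), fun a ha => (htK (ht.mem_toFinset.1 ha)).1,
    fun v hv hJ => ?_⟩
  have hτ : 0 < τ v := one_pos.trans_le ((le_max_left _ _).trans hJ.le)
  have hu : (τ v)⁻¹ • v ∈ {u : V | τ u = 1 ∧ ‖u‖ ≤ R} := by
    refine ⟨by rw [map_smul, smul_eq_mul, inv_mul_cancel₀ hτ.ne'], ?_⟩
    rw [norm_smul, norm_inv, Real.norm_of_nonneg hτ.le, inv_mul_le_iff₀ hτ]
    linarith
  obtain ⟨a, ha, hua⟩ := mem_iUnion₂.1 (hcov hu)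
  have hj₁ := Nat.floor_le hτ.le
  have hj₂ := Nat.lt_floor_add_one (τ v)
  refine ⟨a, ht.mem_toFinset.2 ha, ⌊τ v⌋₊, hj₁, ?_⟩
  set j : ℝ := (⌊τ v⌋₊ : ℝ)
  have hdir : ‖τ v • ((τ v)⁻¹ • v - a)‖ ≤ (j + 1) * (η / 2) := by
    rw [norm_smul, Real.norm_of_nonneg hτ.le]
    exact mul_le_mul hj₂.le (mem_ball_iff_norm.1 hua).le (norm_nonneg _) (by positivity)
  have hround : ‖(τ v - (j + 1)) • a‖ ≤ (j + 1) * (η / 2) := by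
    have hRj : 2 * R / η ≤ j + 1 := (le_max_right _ _).trans (hJ.le.trans hj₂.le)
    have hfrac : |τ v - (j + 1)| ≤ 1 := abs_le.2 ⟨by linarith, by linarith⟩
    rw [div_le_iff₀ hη] at hRj
    rw [norm_smul, Real.norm_eq_abs]
    linarith [mul_le_mul hfrac (htK ha).2 (norm_nonneg a) zero_le_one]
  calc ‖v - (j + 1) • a‖ = ‖τ v • ((τ v)⁻¹ • v - a) + (τ v - (j + 1)) • a‖ := by
        rw [smul_sub, smul_inv_smul₀ hτ.ne', sub_smul]
        abel_nf
    _ ≤ η * (j + 1) := (norm_add_le_of_le hdir hround).trans (by linarith)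

lemma exists_exp_le_tsum (hR : 0 < R) (l : V →L[ℝ] ℝ) {ε η : ℝ} (hε : 0 < ε) (hη : 0 < η)
    (hlη : ‖l‖ * η ≤ ε / 2) : ∃ (t : Finset V) (C : ℝ), (∀ a ∈ t, τ a = 1) ∧ ∀ v, ‖v‖ ≤ R * τ v →
      ENNReal.ofReal (Real.exp (l v - ε * τ v)) ≤ ENNReal.ofReal C
        + ∑' j : ℕ, ∑ a ∈ t, ENNReal.ofReal (Real.exp (l ((j + 1 : ℝ) • a) + ε / 2 * (1 - j)))
          * (Metric.closedBall ((j + 1 : ℝ) • a) (η * (j + 1))).indicator 1 v := by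
  obtain ⟨t, J, ht, hcov⟩ := exists_finset_cone_cover τ R hη
  refine ⟨t, Real.exp (‖l‖ * (R * J)), ht, fun v hv => ?_⟩
  have hτ : 0 ≤ τ v := nonneg_of_mul_nonneg_right ((norm_nonneg v).trans hv) hR
  rcases le_or_gt (τ v) J with hJ | hJ
  · refine le_add_right (ENNReal.ofReal_le_ofReal (Real.exp_le_exp.2 ?_))
    calc l v - ε * τ v ≤ l v := sub_le_self _ (by positivity)
      _ ≤ ‖l‖ * ‖v‖ := (le_abs_self _).trans (l.le_opNorm v)
      _ ≤ ‖l‖ * (R * J) := by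
        gcongr
        exact hv.trans (by gcongr)
  · obtain ⟨a, ha, j, hj, hball⟩ := hcov v hv hJ
    refine le_add_left (le_trans ?_ (ENNReal.le_tsum j))
    refine le_trans ?_ (Finset.single_le_sum (fun _ _ => bot_le) ha)
    rw [indicator_of_mem (mem_closedBall_iff_norm.2 hball), Pi.one_apply, mul_one]
    refine ENNReal.ofReal_le_ofReal (Real.exp_le_exp.2 ?_)
    have hl : l v - l ((j + 1 : ℝ) • a) ≤ ε / 2 * (j + 1) := by
      rw [← map_sub]
      calc _ ≤ ‖l‖ * ‖v - (j + 1 : ℝ) • a‖ := (le_abs_self _).trans (l.le_opNorm _)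
        _ ≤ ‖l‖ * (η * (j + 1)) := by gcongr
        _ ≤ ε / 2 * (j + 1) := by
          rw [← mul_assoc]
          gcongr
    linarith [mul_le_mul_of_nonneg_left hj hε.le]

lemma tsum_exp_ne_top {ε : ℝ} (hε : 0 < ε) :
    ∑' j : ℕ, ENNReal.ofReal (Real.exp (ε * (1 - j))) ≠ ∞ := by
  have hterm (j : ℕ) : Real.exp (ε * (1 - j)) = Real.exp ε * Real.exp (-ε) ^ j := by
    rw [← Real.exp_nat_mul, ← Real.exp_add]
    ring_nf
  simp only [hterm]
  exact ((summable_geometric_of_lt_one (Real.exp_pos _).le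
    (Real.exp_lt_one_iff.2 (neg_lt_zero.2 hε))).mul_left _).tsum_ofReal_ne_top

lemma exists_lintegral_exp_le [MeasurableSpace V] [BorelSpace V] (hR : 0 < R) (l : V →L[ℝ] ℝ)
    {ε η : ℝ} (hε : 0 < ε) (hη : 0 < η) : ∃ C ≠ ∞, ∀ M : Measure V, M univ ≤ 1 →
      (∀ᵐ v ∂M, ‖v‖ ≤ R * τ v) →
      (∀ w, M (Metric.closedBall w (η * τ w)) ≤ ENNReal.ofReal (Real.exp (-l w))) →
      ∫⁻ v, ENNReal.ofReal (Real.exp (l v - ε * τ v)) ∂M ≤ C := by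
  set η' := min η (ε / 2 / (‖l‖ + 1))
  have hη' : 0 < η' := lt_min hη (by positivity)
  have hlη : ‖l‖ * η' ≤ ε / 2 := by
    have hle := (le_div_iff₀ (by positivity)).1 (min_le_right η (ε / 2 / (‖l‖ + 1)))
    linarith
  obtain ⟨t, C, ht, hexp⟩ := exists_exp_le_tsum τ hR l hε hη' hlη
  refine ⟨ENNReal.ofReal C + t.card * ∑' j : ℕ, ENNReal.ofReal (Real.exp (ε / 2 * (1 - j))),
    by simp [mul_eq_top, tsum_exp_ne_top (half_pos hε)], fun M hM hcone hball => ?_⟩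
  have hmeas (j : ℕ) (a : V) : Measurable
      ((Metric.closedBall ((j + 1 : ℝ) • a) (η' * (j + 1))).indicator (1 : V → ℝ≥0∞)) :=
    measurable_one.indicator measurableSet_closedBall
  calc _ ≤ ∫⁻ v, (ENNReal.ofReal C + ∑' j : ℕ, ∑ a ∈ t, ENNReal.ofReal
            (Real.exp (l ((j + 1 : ℝ) • a) + ε / 2 * (1 - j)))
          * (Metric.closedBall ((j + 1 : ℝ) • a) (η' * (j + 1))).indicator 1 v) ∂M :=
        lintegral_mono_ae (hcone.mono hexp)
    _ = ENNReal.ofReal C * M univ + ∑' j : ℕ, ∑ a ∈ t, ENNReal.ofReal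
            (Real.exp (l ((j + 1 : ℝ) • a) + ε / 2 * (1 - j)))
          * M (Metric.closedBall ((j + 1 : ℝ) • a) (η' * (j + 1))) := by
        rw [lintegral_add_left measurable_const, lintegral_const, lintegral_tsum fun j =>
          (Finset.measurable_fun_sum _ fun a _ => (hmeas j a).const_mul _).aemeasurable]
        simp_rw [lintegral_finsetSum _ fun a _ => (hmeas _ a).const_mul _,
          lintegral_const_mul _ (hmeas _ _), lintegral_indicator_one measurableSet_closedBall]
    _ ≤ ENNReal.ofReal C * 1 + ∑' j : ℕ, ∑ a ∈ t, ENNReal.ofReal (Real.exp (ε / 2 * (1 - j))) := by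
        gcongr with j a ha
        exact exp_mul_measure_closedBall_le τ l (min_le_left _ _) hball (ht a ha) j
    _ = _ := by
        simp only [mul_one, Finset.sum_const, nsmul_eq_mul, ENNReal.tsum_mul_left]

end ExponentialMoment

section Potential

lemma exists_one_le_smul_apply_le {X : Type*} [TopologicalSpace X] {K : Module.End ℝ C(X, ℝ)}
    (hK₀ : ∀ n x, 0 ≤ (K ^ n) 1 x) {C : ℝ} (hK : ∀ n x, (K ^ n) 1 x ≤ C) {ρ : ℝ} (hρ₀ : 0 < ρ)
    (hρ₁ : ρ < 1) : ∃ u : C(X, ℝ), (∀ x, 1 ≤ u x) ∧ ∀ x, ρ * K u x ≤ u x := by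
  obtain ⟨m, hm⟩ := exists_pow_lt_of_lt_one (show 0 < 1 / (|C| + 1) by positivity) hρ₁
  refine ⟨∑ i ∈ Finset.range (m + 1), ρ ^ i • (K ^ i) 1, fun x => ?_, fun x => ?_⟩
  · rw [Finset.sum_range_succ', ContinuousMap.add_apply, ContinuousMap.sum_apply]
    simp only [pow_zero, one_smul, Module.End.one_apply, ContinuousMap.one_apply]
    refine le_add_of_nonneg_left (Finset.sum_nonneg fun i _ => ?_)
    exact mul_nonneg (by positivity) (hK₀ _ x)
  · have hshift : ρ * K (∑ i ∈ Finset.range (m + 1), ρ ^ i • (K ^ i) 1) x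
        = ∑ i ∈ Finset.range (m + 1), ρ ^ (i + 1) * (K ^ (i + 1)) 1 x := by
      simp only [map_sum, map_smul, ContinuousMap.sum_apply, ContinuousMap.smul_apply, smul_eq_mul,
        Finset.mul_sum, pow_succ' K, Module.End.mul_apply, pow_succ' ρ, mul_assoc]
    have hlast : ρ ^ (m + 1) * (K ^ (m + 1)) 1 x ≤ 1 := by
      calc ρ ^ (m + 1) * (K ^ (m + 1)) 1 x ≤ 1 / (|C| + 1) * (|C| + 1) :=
            mul_le_mul ((pow_le_pow_of_le_one hρ₀.le hρ₁.le m.le_succ).trans hm.le)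
              ((hK _ x).trans ((le_abs_self C).trans (lt_add_one _).le)) (hK₀ _ x) (by positivity)
        _ = 1 := by field_simp
    have htel := Finset.sum_range_succ' (fun i => ρ ^ i * (K ^ i) 1 x) (m + 1)
    rw [Finset.sum_range_succ] at htel
    simp only [pow_zero, one_mul, Module.End.one_apply, ContinuousMap.one_apply] at htel
    rw [hshift]
    simp only [ContinuousMap.sum_apply, ContinuousMap.smul_apply, smul_eq_mul]
    linarith

end Potential

section FeynmanKac

namespace ChainSetting

variable {E : Type*} [MeasurableSpace E] [TopologicalSpace E] [PolishSpace E] [BorelSpace E]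
  (S : ChainSetting E) {V : Type*} [NormedAddCommGroup V] [NormedSpace ℝ V] [MeasurableSpace V]
  [BorelSpace V] [SecondCountableTopology V] {F : C(E, V)} {L : V →L[ℝ] ℝ}

lemma apply_le_r_of_lintegral_meanLaw_exp_ne_top
    (hL : ∫⁻ v, ENNReal.ofReal (Real.exp (L v)) ∂S.meanLaw F 1 ≠ ∞) (x : E) : L (F x) ≤ S.r x := by
  have hexp : Measurable fun q : E × V => ENNReal.ofReal (Real.exp (L q.2)) := by fun_prop
  have hae : ∀ᵐ x ∂S.lam, L (F x) ≤ S.r x := by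
    rw [S.lintegral_meanLaw F 1 (by fun_prop)] at hL
    filter_upwards [ae_lt_top (hexp.lintegral_kernel.comp measurable_prodMk_right) hL, S.ae_r_pos]
      with x hx hr
    by_contra! hlt
    refine hx.ne (eq_top_iff.2 ?_)
    calc ∞ = ∫⁻ _ in Ioi (0 : ℝ), ENNReal.ofReal (S.r x) := by
          rw [setLIntegral_const, Real.volume_Ioi, ENNReal.mul_top (by simpa using hr)]
      _ ≤ ∫⁻ s in Ioi (0 : ℝ), ENNReal.ofReal (S.r x * Real.exp (-(S.r x * s)))
            * ENNReal.ofReal (Real.exp (L (0 + s • F x))) := by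
          refine setLIntegral_mono' measurableSet_Ioi fun s hs => ?_
          rw [← ENNReal.ofReal_mul (by positivity), mul_assoc, ← Real.exp_add]
          refine ENNReal.ofReal_le_ofReal (le_mul_of_one_le_right hr.le (Real.one_le_exp ?_))
          rw [zero_add, map_smul, smul_eq_mul]
          linarith [mul_lt_mul_of_pos_left hlt hs]
      _ = _ := by
          rw [← S.lintegral_jumpKernel_fst x (by fun_prop), pow_one, Function.comp_apply,
            S.lintegral_addKernel F hexp]
  by_contra! hlt
  refine (S.lam_pos _ (isOpen_lt S.r_cont (L.continuous.comp F.continuous)) ⟨x, hlt⟩).ne' ?_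
  simpa only [ae_iff, not_le, Function.comp_apply] using hae

variable [CompactSpace E]

lemma integral_dvMap_le {μ : Measure E} [IsFiniteMeasure μ] (hμ : S.Ihat0 μ ≠ ∞) (φ : C(E, ℝ)) :
    ∫ x, S.dvMap φ x ∂μ ≤ (S.Ihat0 μ).toReal := by
  rw [← ENNReal.ofReal_le_iff_le_toReal hμ, S.Ihat0_eq_iSup]
  exact le_iSup (fun φ : C(E, ℝ) => ENNReal.ofReal (∫ x, S.dvMap φ x ∂μ)) φ

section Operator

variable {g : C(E, ℝ)} (hg : ∀ x, g x < S.r x)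

/-- The one-jump Feynman–Kac operator `w ↦ E_x[e^{g(x) τ} w(Z)]` with potential `g`, where `τ` is
the holding time at `x` and `Z` the state reached by the jump. -/
def feynmanKacOp : Module.End ℝ C(E, ℝ) :=
  LinearMap.mulLeft ℝ (⟨fun x => S.r x / (S.r x - g x),
    S.r_cont.div (S.r_cont.sub g.continuous) fun x => (sub_pos.2 (hg x)).ne'⟩ : C(E, ℝ)) ∘ₗ S.skelOp

lemma feynmanKacOp_apply (w : C(E, ℝ)) (x : E) :
    S.feynmanKacOp hg w x = S.r x / (S.r x - g x) * S.skelOp w x := rfl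

lemma feynmanKacOp_nonneg {w : C(E, ℝ)} (hw : ∀ x, 0 ≤ w x) (x : E) :
    0 ≤ S.feynmanKacOp hg w x :=
  mul_nonneg (div_nonneg (S.r_nonneg x) (sub_pos.2 (hg x)).le) (S.skelOp_nonneg hw x)

lemma feynmanKacOp_pow_one_nonneg (n : ℕ) (x : E) : 0 ≤ (S.feynmanKacOp hg ^ n) 1 x := by
  induction n generalizing x with
  | zero => exact zero_le_one
  | succ n ih =>
    rw [pow_succ', Module.End.mul_apply]
    exact S.feynmanKacOp_nonneg hg ih x

lemma le_dvMap_log_of_feynmanKacOp_le {u : C(E, ℝ)} (hu : ∀ x, 0 < u x) {ρ : ℝ}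
    (hρ : ∀ x, ρ * S.feynmanKacOp hg u x ≤ u x) (x : E) :
    g x - (1 - ρ) * S.r x
      ≤ ρ * S.dvMap ⟨fun x => Real.log (u x), u.continuous.log fun x => (hu x).ne'⟩ x := by
  have hexp : expMap ⟨fun x => Real.log (u x), u.continuous.log fun x => (hu x).ne'⟩ = u :=
    ContinuousMap.ext fun y => Real.exp_log (hu y)
  have hsub : ρ * (S.r x * S.skelOp u x) / u x ≤ S.r x - g x := by
    have hgx := sub_pos.2 (hg x)
    have hρx := hρ x
    rw [feynmanKacOp_apply, div_mul_eq_mul_div, mul_div_assoc', div_le_iff₀ hgx] at hρx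
    rw [div_le_iff₀ (hu x)]
    linarith
  have hinv : Real.exp (-Real.log (u x)) = (u x)⁻¹ := by rw [Real.exp_neg, Real.exp_log (hu x)]
  have hdv : S.dvMap ⟨fun x => Real.log (u x), u.continuous.log fun x => (hu x).ne'⟩ x
      = S.r x - S.r x * S.skelOp u x / u x := by
    rw [dvMap_apply, hexp]
    change S.r x - S.r x * S.skelOp u x * Real.exp (-Real.log (u x)) = _
    rw [hinv, ← div_eq_mul_inv]
  rw [hdv, mul_sub, mul_div_assoc']
  linarith

lemma integral_le_toReal_Ihat0_of_feynmanKacOp_pow_le {μ : Measure E} [IsFiniteMeasure μ]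
    (hμ : S.Ihat0 μ ≠ ∞) {C : ℝ} (hC : ∀ n x, (S.feynmanKacOp hg ^ n) 1 x ≤ C) :
    ∫ x, g x ∂μ ≤ (S.Ihat0 μ).toReal := by
  have hr : Integrable S.r μ := integrable_of_continuous S.r_cont μ
  have hgi : Integrable g μ := integrable_of_continuous g.continuous μ
  have hle {ρ : ℝ} (hρ₀ : 0 < ρ) (hρ₁ : ρ < 1) :
      ∫ x, g x ∂μ ≤ ρ * (S.Ihat0 μ).toReal + (1 - ρ) * ∫ x, S.r x ∂μ := by
    obtain ⟨u, hu₁, hu⟩ :=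
      exists_one_le_smul_apply_le (S.feynmanKacOp_pow_one_nonneg hg) hC hρ₀ hρ₁
    have hu₀ (x : E) : 0 < u x := one_pos.trans_le (hu₁ x)
    have hint := integral_mono (hgi.sub (hr.const_mul (1 - ρ)))
      ((integrable_of_continuous (ContinuousMap.continuous _) μ).const_mul ρ)
      (S.le_dvMap_log_of_feynmanKacOp_le hg hu₀ hu)
    rw [integral_sub' hgi (hr.const_mul _), integral_const_mul, integral_const_mul] at hint
    linarith [mul_le_mul_of_nonneg_left (S.integral_dvMap_le hμ
      ⟨fun x => Real.log (u x), u.continuous.log fun x => (hu₀ x).ne'⟩) hρ₀.le]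
  have hlim : Tendsto (fun ρ : ℝ => ρ * (S.Ihat0 μ).toReal + (1 - ρ) * ∫ x, S.r x ∂μ) (𝓝[<] 1)
      (𝓝 (S.Ihat0 μ).toReal) :=
    (Continuous.tendsto' (by fun_prop) _ _ (by ring)).mono_left nhdsWithin_le_nhds
  exact ge_of_tendsto hlim (by
    filter_upwards [Ioo_mem_nhdsLT one_pos] with ρ hρ using hle hρ.1 hρ.2)

lemma exists_feynmanKacOp_pow_one_le {C : ℝ≥0∞} (hC : C ≠ ∞)
    (h : ∀ n, ∫⁻ x, ENNReal.ofReal ((S.feynmanKacOp hg ^ n) 1 x) ∂S.lam ≤ C) :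
    ∃ B : ℝ, ∀ n x, (S.feynmanKacOp hg ^ n) 1 x ≤ B := by
  obtain ⟨Q, hQ⟩ := isCompact_univ.exists_bound_of_continuousOn S.p_cont.continuousOn
  obtain ⟨A, hA⟩ := isCompact_univ.exists_bound_of_continuousOn
    (S.r_cont.div (S.r_cont.sub g.continuous) fun x => (sub_pos.2 (hg x)).ne').continuousOn
  have hnn := S.feynmanKacOp_pow_one_nonneg hg
  refine ⟨max 1 (A * (Q * C.toReal)), fun n x => ?_⟩
  cases n with
  | zero => exact le_max_left _ _
  | succ n =>
    have hmean : ∫ y, (S.feynmanKacOp hg ^ n) 1 y ∂S.lam ≤ C.toReal := by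
      rw [← ENNReal.ofReal_le_iff_le_toReal hC, ofReal_integral_eq_lintegral_ofReal
        (integrable_of_continuous (ContinuousMap.continuous _) _) (ae_of_all _ (hnn n))]
      exact h n
    have hQ₀ : 0 ≤ Q := (norm_nonneg _).trans (hQ (x, x) (mem_univ _))
    have hskel : S.skelOp ((S.feynmanKacOp hg ^ n) 1) x ≤ Q * C.toReal := by
      rw [skelOp_apply, S.integral_skel]
      calc ∫ y, S.p x y * (S.feynmanKacOp hg ^ n) 1 y ∂S.lam
          ≤ ∫ y, Q * (S.feynmanKacOp hg ^ n) 1 y ∂S.lam := by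
            refine integral_mono (integrable_of_continuous
              ((S.continuous_p x).mul (ContinuousMap.continuous _)) _)
              (integrable_of_continuous (continuous_const.mul (ContinuousMap.continuous _)) _)
              fun y => mul_le_mul_of_nonneg_right ?_ (hnn n y)
            exact (le_abs_self _).trans (hQ (x, y) (mem_univ _))
        _ ≤ Q * C.toReal := by
            rw [integral_const_mul]
            gcongr
    rw [pow_succ', Module.End.mul_apply, feynmanKacOp_apply]
    refine le_max_of_le_right (mul_le_mul ((le_abs_self _).trans (hA x (mem_univ x))) hskel
      (S.skelOp_nonneg (hnn n) x) ((norm_nonneg _).trans (hA x (mem_univ x))))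

end Operator

lemma lintegral_addKernel_mul_exp (hL : ∀ x, L.compLeftContinuous ℝ E F x < S.r x) {w : C(E, ℝ)}
    (hw : ∀ x, 0 ≤ w x) (z : E × V) :
    ∫⁻ q, ENNReal.ofReal (w q.1) * ENNReal.ofReal (Real.exp (L q.2)) ∂S.addKernel F z
      = ENNReal.ofReal (S.feynmanKacOp hL w z.1) * ENNReal.ofReal (Real.exp (L z.2)) := by
  obtain ⟨x, v⟩ := z
  have hr := S.r_nonneg x
  have hw' := S.skelOp_nonneg hw x
  have hk : 0 < S.r x - L (F x) := sub_pos.2 (hL x)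
  have hsplit (s : ℝ) : ENNReal.ofReal (S.r x * Real.exp (-(S.r x * s)))
        * (ENNReal.ofReal (S.skelOp w x) * ENNReal.ofReal (Real.exp (L (v + s • F x))))
      = ENNReal.ofReal (S.r x / (S.r x - L (F x)) * S.skelOp w x)
          * ENNReal.ofReal (Real.exp (L v))
        * ENNReal.ofReal ((S.r x - L (F x)) * Real.exp (-((S.r x - L (F x)) * s))) := by
    have hexp : Real.exp (-(S.r x * s)) * Real.exp (L (v + s • F x))
        = Real.exp (L v) * Real.exp (-((S.r x - L (F x)) * s)) := by
      rw [← Real.exp_add, ← Real.exp_add, map_add, map_smul, smul_eq_mul]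
      ring_nf
    rw [← ENNReal.ofReal_mul (by positivity), ← ENNReal.ofReal_mul (by positivity),
      ← ENNReal.ofReal_mul (by positivity), ← ENNReal.ofReal_mul (by positivity)]
    congr 1
    calc S.r x * Real.exp (-(S.r x * s)) * (S.skelOp w x * Real.exp (L (v + s • F x)))
        = S.r x * S.skelOp w x * (Real.exp (L v) * Real.exp (-((S.r x - L (F x)) * s))) := by
          rw [← hexp]
          ring
      _ = _ := by
          rw [div_mul_eq_mul_div, div_mul_eq_mul_div, div_mul_eq_mul_div, eq_div_iff hk.ne']
          ring
  rw [S.lintegral_addKernel F (by fun_prop), S.lintegral_jumpKernel x (by fun_prop)]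
  simp only [lintegral_mul_const' _ _ ENNReal.ofReal_ne_top, S.lintegral_skel_ofReal hw, hsplit]
  rw [lintegral_const_mul _ (by fun_prop), lintegral_Ioi_ofReal_mul_exp_neg hk, mul_zero, neg_zero,
    Real.exp_zero, ENNReal.ofReal_one, mul_one]
  rfl

lemma lintegral_addKernel_pow_mul_exp (hL : ∀ x, L.compLeftContinuous ℝ E F x < S.r x) (n : ℕ)
    {w : C(E, ℝ)} (hw : ∀ x, 0 ≤ w x) (z : E × V) :
    ∫⁻ q, ENNReal.ofReal (w q.1) * ENNReal.ofReal (Real.exp (L q.2)) ∂(S.addKernel F ^ n) z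
      = ENNReal.ofReal ((S.feynmanKacOp hL ^ n) w z.1) * ENNReal.ofReal (Real.exp (L z.2)) := by
  induction n generalizing w with
  | zero =>
    rw [pow_zero, pow_zero, Module.End.one_apply]
    exact lintegral_dirac' z (by fun_prop)
  | succ n ih =>
    rw [lintegral_kernel_pow_succ _ _ (by fun_prop), pow_succ, Module.End.mul_apply,
      ← ih (S.feynmanKacOp_nonneg hL hw)]
    simp only [S.lintegral_addKernel_mul_exp hL hw]

lemma lintegral_meanLaw_exp (hL : ∀ x, L.compLeftContinuous ℝ E F x < S.r x) (n : ℕ) :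
    ∫⁻ v, ENNReal.ofReal (Real.exp (L v)) ∂S.meanLaw F n
      = ∫⁻ x, ENNReal.ofReal ((S.feynmanKacOp hL ^ n) 1 x) ∂S.lam := by
  rw [S.lintegral_meanLaw F n (by fun_prop)]
  simpa using lintegral_congr (μ := S.lam) fun x =>
    S.lintegral_addKernel_pow_mul_exp hL n (w := 1) (fun _ => zero_le_one) (x, 0)

lemma integral_le_toReal_Ihat0_of_lintegral_meanLaw_exp_le {μ : Measure E} [IsProbabilityMeasure μ]
    (hμ : S.Ihat0 μ ≠ ∞) {τ : V →L[ℝ] ℝ} (hτ : ∀ x, τ (F x) = 1)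
    (hL : ∀ ε : ℝ, 0 < ε → ∃ C ≠ ∞, ∀ n,
      ∫⁻ v, ENNReal.ofReal (Real.exp ((L - ε • τ) v)) ∂S.meanLaw F n ≤ C) :
    ∫ x, L (F x) ∂μ ≤ (S.Ihat0 μ).toReal := by
  refine _root_.le_of_forall_pos_le_add fun ε hε => ?_
  have happly (ε : ℝ) (x : E) : (L - ε • τ) (F x) = L (F x) - ε := by simp [hτ]
  have hlt (x : E) : (L - ε • τ).compLeftContinuous ℝ E F x < S.r x := by
    obtain ⟨C, hC, hle⟩ := hL (ε / 2) (half_pos hε)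
    have := S.apply_le_r_of_lintegral_meanLaw_exp_ne_top (ne_top_of_le_ne_top hC (hle 1)) x
    rw [happly] at this
    change (L - ε • τ) (F x) < S.r x
    rw [happly]
    linarith
  obtain ⟨C, hC, hle⟩ := hL ε hε
  simp only [S.lintegral_meanLaw_exp hlt] at hle
  obtain ⟨B, hB⟩ := S.exists_feynmanKacOp_pow_one_le hlt hC hle
  have hint : ∫ x, (L - ε • τ) (F x) ∂μ ≤ (S.Ihat0 μ).toReal :=
    S.integral_le_toReal_Ihat0_of_feynmanKacOp_pow_le hlt hμ hB
  simp only [happly] at hint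
  rw [integral_sub (f := fun x => L (F x))
    (integrable_of_continuous (L.continuous.comp F.continuous) μ) (integrable_const _),
    integral_const, probReal_univ, one_smul] at hint
  linarith

variable [FiniteDimensional ℝ V]

lemma exists_lintegral_meanLaw_exp_le {τ : V →L[ℝ] ℝ} (hτ : ∀ x, τ (F x) = 1) {c : ℝ} (hc₀ : 0 < c)
    (hc₁ : c ≤ 1) {η : ℝ} (hη : 0 < η)
    (hL : ∀ n w, (ENNReal.ofReal c • S.meanLaw F n) (Metric.closedBall w (η * τ w))
      ≤ ENNReal.ofReal (Real.exp (-L w))) {ε : ℝ} (hε : 0 < ε) :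
    ∃ C ≠ ∞, ∀ n, ∫⁻ v, ENNReal.ofReal (Real.exp ((L - ε • τ) v)) ∂S.meanLaw F n ≤ C := by
  obtain ⟨R, hR⟩ := isCompact_univ.exists_bound_of_continuousOn F.continuous.continuousOn
  obtain ⟨C, hC, hle⟩ := exists_lintegral_exp_le τ (R := max R 1) (by positivity) L hε hη
  refine ⟨(ENNReal.ofReal c)⁻¹ * C, by finiteness, fun n => ?_⟩
  have hcone : ∀ᵐ v ∂S.meanLaw F n, ‖v‖ ≤ max R 1 * τ v := by
    refine S.ae_meanLaw_mem F (C := {v | ‖v‖ ≤ max R 1 * τ v})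
      (isClosed_le (by fun_prop) (by fun_prop)).measurableSet (by simp) (fun v hv x s hs => ?_) n
    rw [mem_ofPred_eq, map_add, map_smul, hτ, smul_eq_mul, mul_one, mul_add]
    refine norm_add_le_of_le hv ?_
    rw [norm_smul, Real.norm_of_nonneg hs.le, mul_comm]
    gcongr
    exact (hR x (mem_univ x)).trans (le_max_left _ _)
  have hbound := hle (ENNReal.ofReal c • S.meanLaw F n)
    (mul_le_one' (ofReal_le_one.2 hc₁) (S.meanLaw_univ_le F n)) (Measure.ae_smul_measure hcone _)
    (hL n)
  rw [lintegral_smul_measure, smul_eq_mul] at hbound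
  exact (ENNReal.mul_le_iff_le_inv (ENNReal.ofReal_pos.2 hc₀).ne' ENNReal.ofReal_ne_top).1 hbound

lemma mem_closure_divisibleHull_rateSet {τ : V →L[ℝ] ℝ} (hτ : ∀ x, τ (F x) = 1) {c : ℝ}
    (hc₀ : 0 < c) (hc₁ : c ≤ 1) (hc : ∀ x y, c ≤ S.p x y) {η : ℝ} (hη : 0 < η) {μ : Measure E}
    [IsProbabilityMeasure μ] (hμ : S.Ihat0 μ ≠ ∞) {h : ℝ} (hh : (S.Ihat0 μ).toReal < h) :
    (∫ x, F x ∂μ, h)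
      ∈ closure (divisibleHull (rateSet (fun n => ENNReal.ofReal c • S.meanLaw F n) τ η)) := by
  by_contra hvh
  obtain ⟨l, hl, hball⟩ :=
    (S.isConvSupermul_smul_meanLaw F hc₀ hc₁ hc).exists_clm_of_notMem_closure τ η hvh
  have hle := S.integral_le_toReal_Ihat0_of_lintegral_meanLaw_exp_le (L := l) hμ hτ fun ε hε =>
    S.exists_lintegral_meanLaw_exp_le hτ hc₀ hc₁ hη hball hε
  rw [l.integral_comp_comm (integrable_of_continuous F.continuous μ)] at hle
  exact (hl.trans_le hle).not_gt hh

end ChainSetting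

end FeynmanKac

section LowerBound

section Block

variable {V : Type*} [NormedAddCommGroup V] [NormedSpace ℝ V] [MeasurableSpace V]

lemma exists_exp_le_measure_closedBall {M : ℕ → Measure V} (τ : V →L[ℝ] ℝ) {v : V} {h h' η : ℝ}
    (hhh' : h < h') (hη : 0 < η)
    (hv : ∀ η' > 0, (v, h) ∈ closure (divisibleHull (rateSet M τ η'))) :
    ∃ N n : ℕ, 0 < N ∧ ENNReal.ofReal (Real.exp (-(N * h')))
      ≤ M n (Metric.closedBall ((N : ℝ) • v) (N * η)) := by
  set B := ‖τ‖ * (‖v‖ + 1)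
  have hB : 0 ≤ B := by positivity
  set η' := η / (2 * (B + 1)) with hη'
  obtain ⟨⟨w, k⟩, ⟨N, hN, n, hn⟩, hdist⟩ := Metric.mem_closure_iff.1 (hv η' (by positivity))
    (min (min 1 (η / 2)) (h' - h)) (by simp [hη, hhh'])
  obtain ⟨hvw, hhk⟩ := max_lt_iff.1 hdist
  obtain ⟨⟨hvw₁, hvw₂⟩, -⟩ := by simpa only [dist_eq_norm, lt_min_iff] using hvw
  obtain ⟨-, hk : k - h < h' - h⟩ := abs_sub_lt_iff.1 (hhk.trans_le (min_le_right _ _))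
  refine ⟨N, n, hN, le_trans ?_ (hn.trans (measure_mono ?_))⟩
  · simp only [Prod.smul_snd, smul_eq_mul]
    gcongr
    linarith
  · have hτw : η' * τ w ≤ η / 2 := by
      have hw : ‖w‖ ≤ ‖v‖ + 1 := by linarith [norm_sub_norm_le w v, norm_sub_rev w v]
      calc η' * τ w ≤ η' * (B + 1) := by
            gcongr
            exact ((le_abs_self _).trans (τ.le_opNorm_of_le hw)).trans (by linarith)
        _ = η / 2 := by rw [hη']; field_simp
    refine Metric.closedBall_subset_closedBall' ?_
    rw [Prod.smul_fst, dist_eq_norm, ← smul_sub, norm_smul, norm_sub_rev, map_smul, smul_eq_mul,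
      Real.norm_natCast, mul_left_comm, ← mul_add]
    gcongr
    linarith

lemma IsConvSupermul.pow_le_measure_closedBall [BorelSpace V] [SecondCountableTopology V]
    {M : ℕ → Measure V} (hM : IsConvSupermul M) {n : ℕ} {a : V} {ρ : ℝ} {q : ℝ≥0∞}
    (hq : q ≤ M n (Metric.closedBall a ρ)) {j : ℕ} (hj : 1 ≤ j) :
    q ^ j ≤ M (j * n) (Metric.closedBall ((j : ℝ) • a) (j * ρ)) := by
  induction j, hj using Nat.le_induction with
  | base => simpa using hq
  | succ j hj ih =>
    rw [Nat.succ_mul, pow_succ]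
    refine (mul_le_mul' ih hq).trans
      (hM.mul_le (j * n) n Metric.isClosed_closedBall.measurableSet fun b hb b' hb' => ?_)
    rw [Nat.cast_succ, add_smul, add_mul, one_smul, one_mul]
    simpa only [mem_closedBall_iff_norm, add_sub_add_comm] using
      norm_add_le_of_le (mem_closedBall_iff_norm.1 hb) (mem_closedBall_iff_norm.1 hb')

end Block

section FirstJump

lemma ofReal_one_sub_exp_neg_le {k : ℝ} (hk : 0 < k) :
    ENNReal.ofReal (1 - Real.exp (-k))
      ≤ ∫⁻ s in Ioc 0 1, ENNReal.ofReal (k * Real.exp (-(k * s))) := by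
  have hsplit := lintegral_union (μ := volume)
    (f := fun s => ENNReal.ofReal (k * Real.exp (-(k * s)))) (measurableSet_Ioi (a := (1 : ℝ)))
    (disjoint_left.2 fun s (hs : s ∈ Ioc 0 1) => hs.2.not_gt)
  rw [Ioc_union_Ioi_eq_Ioi zero_le_one, lintegral_Ioi_ofReal_mul_exp_neg hk,
    lintegral_Ioi_ofReal_mul_exp_neg hk] at hsplit
  rw [ENNReal.ofReal_sub _ (Real.exp_pos _).le, tsub_le_iff_right]
  simpa using hsplit.le

variable {E : Type*} [MeasurableSpace E] [TopologicalSpace E] [PolishSpace E] [BorelSpace E]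
  {S : ChainSetting E} {V : Type*} [NormedAddCommGroup V] [NormedSpace ℝ V]
  [MeasurableSpace V] [BorelSpace V] [SecondCountableTopology V] {F : C(E, V)}

lemma ChainSetting.mul_lintegral_meanLaw_le_addKernel_pow_succ {c : ℝ}
    (hc : ∀ x y, c ≤ S.p x y) (m : ℕ) {B : Set V} (hB : MeasurableSet B) (z : E × V) :
    ENNReal.ofReal c * ∫⁻ w, S.meanLaw F m ((w.2 + ·) ⁻¹' B) ∂S.addKernel F z
      ≤ (S.addKernel F ^ (m + 1)) z (Prod.snd ⁻¹' B) := by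
  have hmean (v : V) : S.meanLaw F m ((v + ·) ⁻¹' B)
      = ∫⁻ y, (S.addKernel F ^ m) (y, v) (Prod.snd ⁻¹' B) ∂S.lam := by
    rw [← lintegral_indicator_one (measurable_const_add v hB)]
    refine (S.lintegral_meanLaw_add F m (measurable_one.indicator hB) v).trans ?_
    exact lintegral_congr fun y => lintegral_indicator_one (measurable_snd hB)
  rw [pow_succ]
  simp only [hmean]
  exact (S.mul_lintegral_lam_le_addKernel F hc
    (Kernel.measurable_coe _ (measurable_snd hB)) z).trans_eq
    (Kernel.comp_apply' _ _ _ (measurable_snd hB)).symm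

variable [CompactSpace E]

lemma ChainSetting.mul_measure_closedBall_le_lintegral_addKernel (M : Measure V) [SFinite M]
    {x : E} (hx : 0 < S.r x) (a : V) (ρ : ℝ) :
    ENNReal.ofReal (1 - Real.exp (-S.r x)) * M (Metric.closedBall a ρ)
      ≤ ∫⁻ w, M ((w.2 + ·) ⁻¹' Metric.closedBall a (ρ + ‖F‖)) ∂S.addKernel F (x, 0) := by
  set B := Metric.closedBall a (ρ + ‖F‖)
  let g : V → ℝ≥0∞ := fun v => M ((v + ·) ⁻¹' B)
  have hg : Measurable g :=
    measurable_measure_prodMk_left (measurable_add Metric.isClosed_closedBall.measurableSet)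
  have hball {s : ℝ} (hs : s ∈ Ioc 0 1) : M (Metric.closedBall a ρ) ≤ g (s • F x) := by
    refine measure_mono fun b hb => ?_
    rw [mem_preimage, mem_closedBall_iff_norm, add_comm, add_sub_right_comm]
    refine norm_add_le_of_le (mem_closedBall_iff_norm.1 hb) ?_
    rw [norm_smul, Real.norm_of_nonneg hs.1.le]
    exact (mul_le_of_le_one_left (norm_nonneg _) hs.2).trans (F.norm_coe_le_norm x)
  calc _ ≤ ∫⁻ s in Ioc 0 1, ENNReal.ofReal (S.r x * Real.exp (-(S.r x * s)))
        * M (Metric.closedBall a ρ) := by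
        rw [lintegral_mul_const _ (by fun_prop)]
        gcongr
        exact ofReal_one_sub_exp_neg_le hx
    _ ≤ ∫⁻ s in Ioc 0 1, ENNReal.ofReal (S.r x * Real.exp (-(S.r x * s))) * g (s • F x) :=
        setLIntegral_mono' measurableSet_Ioc fun s hs => by gcongr; exact hball hs
    _ ≤ ∫⁻ s in Ioi 0, ENNReal.ofReal (S.r x * Real.exp (-(S.r x * s))) * g (s • F x) :=
        lintegral_mono_set Ioc_subset_Ioi_self
    _ = ∫⁻ w, g w.2 ∂S.addKernel F (x, 0) := by
        rw [S.lintegral_addKernel F (h := fun w => g w.2) (by fun_prop),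
          S.lintegral_jumpKernel_fst x (g := fun s => g (0 + s • F x)) (by fun_prop)]
        simp only [zero_add]

lemma IsChainLaw.mul_meanLaw_closedBall_le {x : E} {P : Measure (Traj E)}
    (hP : IsChainLaw S.r S.skel x P) (hx : 0 < S.r x) {c : ℝ} (hc : ∀ x y, c ≤ S.p x y) (m : ℕ)
    (a : V) (ρ : ℝ) :
    ENNReal.ofReal (1 - Real.exp (-S.r x))
        * (ENNReal.ofReal c * S.meanLaw F m (Metric.closedBall a ρ))
      ≤ P {ω | Traj.additive F (m + 1) ω ∈ Metric.closedBall a (ρ + ‖F‖)} := by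
  set B := Metric.closedBall a (ρ + ‖F‖)
  have hB : MeasurableSet B := Metric.isClosed_closedBall.measurableSet
  calc _ ≤ ENNReal.ofReal c * ∫⁻ w, S.meanLaw F m ((w.2 + ·) ⁻¹' B) ∂S.addKernel F (x, 0) := by
        rw [mul_left_comm]
        gcongr
        exact S.mul_measure_closedBall_le_lintegral_addKernel _ hx a ρ
    _ ≤ (S.addKernel F ^ (m + 1)) (x, 0) (Prod.snd ⁻¹' B) :=
        S.mul_lintegral_meanLaw_le_addKernel_pow_succ hc m hB _
    _ = ∫⁻ ω, (Prod.snd ⁻¹' B).indicator 1 (ω.1 (m + 1), Traj.additive F (m + 1) ω) ∂P := by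
        rw [hP.lintegral_additive_eq_pow F hx _ (measurable_one.indicator (measurable_snd hB)),
          lintegral_indicator_one (measurable_snd hB)]
    _ = _ := lintegral_indicator_one (Traj.measurable_additive F.continuous.measurable _ hB)

end FirstJump

section Neighbourhood

variable {E : Type*} [MeasurableSpace E] [TopologicalSpace E] [CompactSpace E] [BorelSpace E]
  [Nonempty E] {V : Type*} [NormedAddCommGroup V] [NormedSpace ℝ V] [CompleteSpace V]
  [SecondCountableTopology V]

lemma norm_integral_toPM_empMeas_sub_le {T : ℝ} (hT : 0 < T) (F : C(E, V)) {ω : Traj E}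
    (hω : ∀ i, ω.2 i ≠ ∞) {n : ℕ} (hn : Traj.additive (fun _ => (1 : ℝ)) n ω ≤ T) (t : ℝ) (v : V) :
    ‖(∫ x, F x ∂(toPM (empMeas T ω) : Measure E)) - v‖
      ≤ T⁻¹ * ((T - Traj.additive (fun _ => (1 : ℝ)) n ω) * ‖F‖
        + ‖Traj.additive F n ω - t • v‖ + |T - t| * ‖v‖) := by
  have hjump := Traj.jumpTime_eq_ofReal_additive hω n
  have hpos := Traj.norm_integral_pos_sub_additive_le F hT.le
    (hjump.trans_le (ENNReal.ofReal_le_ofReal hn))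
  rw [hjump, ENNReal.toReal_ofReal (Traj.additive_one_nonneg n ω)] at hpos
  rw [Traj.integral_toPM_empMeas hT]
  set J := ∫ t in 0..T, F (Traj.pos t ω)
  have hsplit : T⁻¹ • J - v
      = T⁻¹ • (J - Traj.additive F n ω + (Traj.additive F n ω - t • v) - (T - t) • v) := by
    rw [sub_smul, sub_add_sub_cancel, sub_sub, add_sub_cancel, smul_sub, inv_smul_smul₀ hT.ne']
  rw [hsplit, norm_smul, Real.norm_of_nonneg (by positivity)]
  gcongr
  refine (norm_sub_le _ _).trans (add_le_add (norm_add_le_of_le hpos le_rfl) ?_)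
  rw [norm_smul, Real.norm_eq_abs]

lemma norm_integral_toPM_empMeas_sub_le_mul {F : C(E, V)} {τ : V →L[ℝ] ℝ} (hτF : ∀ x, τ (F x) = 1)
    (hτ : ‖τ‖ ≤ 1) {v : V} (hτv : τ v = 1) (hv : ‖v‖ ≤ ‖F‖) {T t η : ℝ} (hT : 0 < T) (hη : 0 ≤ η)
    (hFT : ‖F‖ ≤ η * T) (ht : t ∈ Icc ((1 - 3 * η) * T) ((1 - 2 * η) * T)) {ω : Traj E}
    (hω : ∀ i, ω.2 i ≠ ∞) {n : ℕ}
    (hn : Traj.additive F n ω ∈ Metric.closedBall (t • v) (t * η + ‖F‖)) :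
    ‖(∫ x, F x ∂(toPM (empMeas T ω) : Measure E)) - v‖ ≤ η * (8 * ‖F‖ + 2) := by
  rw [mem_closedBall_iff_norm] at hn
  obtain ⟨ht₁, ht₂⟩ := ht
  set s := Traj.additive (fun _ => (1 : ℝ)) n ω
  have htη : t * η ≤ η * T := by nlinarith
  have hst : |s - t| ≤ 2 * (η * T) := by
    have hτs : τ (Traj.additive F n ω - t • v) = s - t := by
      have hmap : τ (Traj.additive F n ω) = s := by
        simpa [hτF] using Traj.map_additive τ.toLinearMap F n ω
      simp [hmap, hτv]
    calc |s - t| ≤ 1 * ‖Traj.additive F n ω - t • v‖ := hτs ▸ τ.le_of_opNorm_le hτ _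
      _ ≤ 2 * (η * T) := by linarith
  obtain ⟨hst₁, hst₂⟩ := abs_le.1 hst
  refine (norm_integral_toPM_empMeas_sub_le hT F hω (n := n) (by linarith) t v).trans ?_
  rw [inv_mul_le_iff₀ hT]
  calc (T - s) * ‖F‖ + ‖Traj.additive F n ω - t • v‖ + |T - t| * ‖v‖
      ≤ 5 * (η * T) * ‖F‖ + 2 * (η * T) + 3 * (η * T) * ‖F‖ := by
        gcongr
        · linarith
        · linarith
        · rw [abs_of_nonneg] <;> linarith
    _ = T * (η * (8 * ‖F‖ + 2)) := by ring

end Neighbourhood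

lemma exists_natCast_mul_mem_Icc {a b d : ℝ} (hd : 0 < d) (hdb : d ≤ b) (hab : a + d ≤ b) :
    ∃ j : ℕ, 1 ≤ j ∧ j * d ∈ Icc a b := by
  have hfloor := (div_lt_iff₀ hd).1 (Nat.lt_floor_add_one (b / d))
  refine ⟨⌊b / d⌋₊, (Nat.one_le_floor_iff _).2 ((one_le_div hd).2 hdb), by linarith, ?_⟩
  exact (le_div_iff₀ hd).1 (Nat.floor_le (by positivity [hd.trans_le hdb]))

lemma le_liminf_iInf_log {ι : Type*} {s : Set ι} {m : ℝ → ι → ℝ≥0∞} {K a T₀ : ℝ} (hK : 0 < K)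
    (hm : ∀ T ≥ T₀, ∀ i ∈ s, ENNReal.ofReal (K * Real.exp (-(a * T))) ≤ m T i) :
    ((-a : ℝ) : EReal)
      ≤ liminf (fun T : ℝ => ⨅ i ∈ s, ((1 / T : ℝ) : EReal) * ENNReal.log (m T i)) atTop := by
  rw [← (tendsto_coe_div_sub (Real.log K) a).liminf_eq]
  refine liminf_le_liminf ?_
  filter_upwards [eventually_gt_atTop 0, eventually_ge_atTop T₀] with T hT hTT₀
  rw [← one_div_mul_log_ofReal_mul_exp hK hT]
  refine le_iInf₂ fun i hi => mul_le_mul_of_nonneg_left (ENNReal.log_le_log (hm T hTT₀ i hi)) ?_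
  exact_mod_cast (one_div_pos.2 hT).le

lemma exists_finset_abs_integral_sub_lt_imp_mem {X : Type*} [TopologicalSpace X] [CompactSpace X]
    [MeasurableSpace X] [OpensMeasurableSpace X] {A : Set (ProbabilityMeasure X)} (hA : IsOpen A)
    {μ : ProbabilityMeasure X} (hμ : μ ∈ A) :
    ∃ (t : Finset C(X, ℝ)) (ε : ℝ), 0 < ε ∧ ∀ ν : ProbabilityMeasure X,
      (∀ f ∈ t, |(∫ x, f x ∂(ν : Measure X)) - ∫ x, f x ∂(μ : Measure X)| < ε) → ν ∈ A := by
  have hle : ⨅ f : C(X, ℝ), comap (fun ν : ProbabilityMeasure X => ∫ x, f x ∂(ν : Measure X))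
      (𝓝 (∫ x, f x ∂(μ : Measure X))) ≤ 𝓝 μ := by
    refine tendsto_id'.1 (ProbabilityMeasure.tendsto_iff_forall_integral_tendsto.2 fun f => ?_)
    exact tendsto_comap.mono_left (iInf_le _ f.toContinuousMap)
  have hbasis := HasBasis.iInf' fun f : C(X, ℝ) =>
    (Metric.nhds_basis_ball (x := ∫ x, f x ∂(μ : Measure X))).comap
      fun ν : ProbabilityMeasure X => ∫ x, f x ∂(ν : Measure X)
  obtain ⟨⟨t, δ⟩, ⟨ht, hδ⟩, htA⟩ := hbasis.mem_iff.1 (hle (hA.mem_nhds hμ))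
  obtain ⟨ε, hεδ, hε⟩ := (((eventually_all_finite ht).2 fun f hf =>
    (eventually_le_nhds (hδ f hf)).filter_mono nhdsWithin_le_nhds).and
      (self_mem_nhdsWithin (a := (0 : ℝ)) (s := Ioi 0))).exists
  refine ⟨ht.toFinset, ε, hε, fun ν hν => htA (mem_iInter₂.2 fun f hf => ?_)⟩
  exact (hν f (ht.mem_toFinset.2 hf)).trans_le (hεδ f hf)

section ProbabilityLowerBound

variable {E : Type*} [MeasurableSpace E] [TopologicalSpace E] [CompactSpace E] [PolishSpace E]
  [BorelSpace E] (S : ChainSetting E)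

namespace ChainSetting

section Vector

variable {V : Type*} [NormedAddCommGroup V] [NormedSpace ℝ V] [FiniteDimensional ℝ V]
  [MeasurableSpace V] [BorelSpace V] {F : C(E, V)} {τ : V →L[ℝ] ℝ} {μ : Measure E}
  [IsProbabilityMeasure μ]

lemma exists_exp_le_meanLaw (hτF : ∀ x, τ (F x) = 1) {c : ℝ} (hc₀ : 0 < c) (hc₁ : c ≤ 1)
    (hc : ∀ x y, c ≤ S.p x y) (hμ : S.Ihat0 μ ≠ ∞) {h : ℝ} (hh : (S.Ihat0 μ).toReal < h) {η : ℝ}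
    (hη : 0 < η) : ∃ N : ℕ, 0 < N ∧ ∃ n : ℕ, ∀ j : ℕ, 1 ≤ j →
      ENNReal.ofReal (Real.exp (-(j * N * h))) ≤ ENNReal.ofReal c
        * S.meanLaw F (j * n) (Metric.closedBall ((j * N : ℝ) • ∫ x, F x ∂μ) (j * N * η)) := by
  obtain ⟨k, hk, hkh⟩ := exists_between hh
  obtain ⟨N, n, hN, hn⟩ := exists_exp_le_measure_closedBall τ hkh hη fun η' hη' =>
    S.mem_closure_divisibleHull_rateSet hτF hc₀ hc₁ hc hη' hμ hk
  refine ⟨N, hN, n, fun j hj => ?_⟩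
  convert (S.isConvSupermul_smul_meanLaw F hc₀ hc₁ hc).pow_le_measure_closedBall hn hj using 1
  · rw [← ENNReal.ofReal_pow (Real.exp_pos _).le, ← Real.exp_nat_mul, mul_neg, mul_assoc]
  · rw [smul_smul, ← mul_assoc, Measure.smul_apply, smul_eq_mul]

variable [Nonempty E]

lemma exists_le_measure_norm_integral_sub_lt (hτF : ∀ x, τ (F x) = 1) (hτ : ‖τ‖ ≤ 1)
    (hμ : S.Ihat0 μ ≠ ∞) {h : ℝ} (hh : (S.Ihat0 μ).toReal < h) {ε : ℝ} (hε : 0 < ε) :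
    ∃ T₀ : ℝ, ∀ T ≥ T₀, ∀ (x : E) (P : Measure (Traj E)), IsChainLaw S.r S.skel x P → 0 < S.r x →
      ENNReal.ofReal (1 - Real.exp (-S.r x)) * ENNReal.ofReal (Real.exp (-(h * T)))
        ≤ P {ω | ‖(∫ y, F y ∂(toPM (empMeas T ω) : Measure E)) - ∫ y, F y ∂μ‖ < ε} := by
  obtain ⟨c, hc₀, hc₁, hc⟩ := S.exists_le_p
  set v := ∫ y, F y ∂μ with hv
  have hvF : ‖v‖ ≤ ‖F‖ := by
    simpa using norm_integral_le_of_norm_le_const (μ := μ) (ae_of_all _ F.norm_coe_le_norm)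
  have hτv : τ v = 1 := by
    rw [hv, ← τ.integral_comp_comm (integrable_of_continuous F.continuous μ)]
    simp [hτF]
  obtain ⟨η, hη, hη'⟩ : ∃ η > 0, η ≤ 1 / 4 ∧ η * (8 * ‖F‖ + 2) < ε := by
    refine ⟨min (1 / 4) (ε / (8 * ‖F‖ + 3)), by positivity, min_le_left _ _, ?_⟩
    have := (le_div_iff₀ (by positivity)).1 (min_le_right (1 / 4) (ε / (8 * ‖F‖ + 3)))
    have : 0 < min (1 / 4) (ε / (8 * ‖F‖ + 3)) := by positivity
    linarith
  obtain ⟨hη₁, hηε⟩ := hη'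
  obtain ⟨N, hN, n, hn⟩ := S.exists_exp_le_meanLaw hτF hc₀ hc₁ hc hμ hh hη
  have hN₀ : (0 : ℝ) < N := Nat.cast_pos.2 hN
  refine ⟨max (2 * N) ((N + ‖F‖) / η), fun T hT x P hP hx => ?_⟩
  obtain ⟨hNT, hFT⟩ := max_le_iff.1 hT
  rw [div_le_iff₀' hη] at hFT
  have hT₀ : 0 < T := by linarith
  obtain ⟨j, hj, hjT⟩ := exists_natCast_mul_mem_Icc hN₀ (a := (1 - 3 * η) * T)
    (b := (1 - 2 * η) * T) (by nlinarith) (by linarith [norm_nonneg F])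
  have := hP.prob
  calc _ ≤ ENNReal.ofReal (1 - Real.exp (-S.r x)) * (ENNReal.ofReal c
        * S.meanLaw F (j * n) (Metric.closedBall ((j * N : ℝ) • v) (j * N * η))) := by
        gcongr
        refine le_trans (ENNReal.ofReal_le_ofReal (Real.exp_le_exp.2 ?_)) (hn j hj)
        have hh₀ : 0 < h := ENNReal.toReal_nonneg.trans_lt hh
        nlinarith [hjT.2, mul_pos hη hT₀]
    _ ≤ _ := hP.mul_meanLaw_closedBall_le hx hc _ _ _
    _ ≤ _ := measure_mono_ae <| by
        filter_upwards [hP.ae_holding_ne_top hx] with ω hω hmem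
        exact (norm_integral_toPM_empMeas_sub_le_mul hτF hτ hτv hvF hT₀ hη.le
          (by linarith) hjT hω hmem).trans_lt hηε

end Vector

variable [Nonempty E]

lemma exists_le_measure_toPM_empMeas_mem {A : Set (ProbabilityMeasure E)} (hA : IsOpen A)
    {μ : ProbabilityMeasure E} (hμA : μ ∈ A) {h : ℝ}
    (hh : (S.Ihat0 (μ : Measure E) : EReal) < h) :
    ∃ T₀ : ℝ, ∀ T ≥ T₀, ∀ (x : E) (P : Measure (Traj E)), IsChainLaw S.r S.skel x P → 0 < S.r x →
      ENNReal.ofReal (1 - Real.exp (-S.r x)) * ENNReal.ofReal (Real.exp (-(h * T)))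
        ≤ P {ω | toPM (empMeas T ω) ∈ A} := by
  have hμ : S.Ihat0 (μ : Measure E) ≠ ∞ := fun htop => by simp [htop] at hh
  rw [← ENNReal.ofReal_toReal hμ, EReal.coe_ennreal_ofReal,
    max_eq_left ENNReal.toReal_nonneg, EReal.coe_lt_coe_iff] at hh
  obtain ⟨t, ε, hε, htA⟩ := exists_finset_abs_integral_sub_lt_imp_mem hA hμA
  let F : C(E, ℝ × (t → ℝ)) :=
    ⟨fun x => (1, fun f => (f : C(E, ℝ)) x), by fun_prop⟩
  have hF (ν : ProbabilityMeasure E) (f : t) :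
      (∫ x, F x ∂(ν : Measure E)).2 f = ∫ x, (f : C(E, ℝ)) x ∂(ν : Measure E) :=
    ((ContinuousLinearMap.proj (R := ℝ) (φ := fun _ : t => ℝ) f).comp
      (ContinuousLinearMap.snd ℝ ℝ (t → ℝ))).integral_comp_comm
        (integrable_of_continuous F.continuous _) |>.symm
  obtain ⟨T₀, hT₀⟩ := S.exists_le_measure_norm_integral_sub_lt (F := F)
    (τ := ContinuousLinearMap.fst ℝ ℝ (t → ℝ)) (fun _ => rfl)
    (ContinuousLinearMap.norm_fst_le ℝ ℝ (t → ℝ)) hμ hh hε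
  refine ⟨T₀, fun T hT x P hP hx => (hT₀ T hT x P hP hx).trans (measure_mono fun ω hω => ?_)⟩
  refine htA _ fun f hf => ?_
  rw [← hF _ ⟨f, hf⟩, ← hF _ ⟨f, hf⟩]
  exact ((norm_le_pi_norm _ (⟨f, hf⟩ : t)).trans (norm_snd_le _)).trans_lt hω

theorem le_liminf_log_measure_toPM_empMeas (P : E → Measure (Traj E))
    (hP : ∀ x, IsChainLaw S.r S.skel x (P x)) {E₁ : Set E} (hE₁ : IsCompact E₁)
    (hE₁' : E₁ ⊆ S.E0ᶜ) {A : Set (ProbabilityMeasure E)} (hA : IsOpen A) :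
    -(⨅ μ ∈ A, (S.Ihat0 (μ : Measure E) : EReal))
      ≤ liminf (fun T : ℝ => ⨅ x ∈ E₁,
        ((1 / T : ℝ) : EReal) * ENNReal.log (P x {ω : Traj E | toPM (empMeas T ω) ∈ A})) atTop := by
  have hr {x : E} (hx : x ∈ E₁) : 0 < S.r x := (S.r_nonneg x).lt_of_ne fun h => hE₁' hx h.symm
  obtain ⟨κ, hκ, hκr⟩ := hE₁.exists_forall_le' S.r_cont.continuousOn fun x hx => hr hx
  have hK : 0 < 1 - Real.exp (-κ) := by simpa using hκ
  rw [EReal.neg_le]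
  refine le_iInf₂ fun μ hμ => EReal.le_of_forall_lt_iff_le.1 fun h hh => ?_
  rw [EReal.neg_le]
  obtain ⟨T₀, hT₀⟩ := S.exists_le_measure_toPM_empMeas_mem hA hμ hh
  refine le_liminf_iInf_log hK (T₀ := T₀) fun T hT x hx => ?_
  refine le_trans ?_ (hT₀ T hT x (P x) (hP x) (hr hx))
  rw [ENNReal.ofReal_mul hK.le]
  gcongr
  exact hκr x hx

end ChainSetting

end ProbabilityLowerBound

end LowerBound

theorem empirical_measure_ldp_general (S : ChainSetting E) (P : E → Measure (Traj E))
    (hP : ∀ x, IsChainLaw S.r S.skel x (P x)) :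
    (∀ (μ₁ μ₂ : Measure E) (a b : ℝ≥0∞), a + b = 1 →
      S.Ihat0 (a • μ₁ + b • μ₂) ≤ a * S.Ihat0 μ₁ + b * S.Ihat0 μ₂) ∧
    (∀ E₁ : Set E, E₁ ⊆ S.E0ᶜ → ∀ C : Set (ProbabilityMeasure E), IsClosed C →
      limsup (fun T : ℝ => ⨆ x ∈ E₁,
          ((1 / T : ℝ) : EReal) * ENNReal.log (P x {ω : Traj E | toPM (empMeas T ω) ∈ C}))
        atTop ≤ -(⨅ μ ∈ C, (S.Ihat0 (μ : Measure E) : EReal))) ∧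
    (∀ E₁ : Set E, IsCompact E₁ → E₁ ⊆ S.E0ᶜ → ∀ A : Set (ProbabilityMeasure E), IsOpen A →
      -(⨅ μ ∈ A, (S.Ihat0 (μ : Measure E) : EReal))
        ≤ liminf (fun T : ℝ => ⨅ x ∈ E₁,
            ((1 / T : ℝ) : EReal) * ENNReal.log (P x {ω : Traj E | toPM (empMeas T ω) ∈ A}))
          atTop) :=
  ⟨fun μ₁ μ₂ _ _ hab => S.Ihat0_add_smul_le μ₁ μ₂ hab,
    fun _ hE₁ _ hC => S.limsup_log_measure_toPM_empMeas_le P hP hE₁ hC,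
    fun _ hcomp hE₁ _ hA => S.le_liminf_log_measure_toPM_empMeas P hP hcomp hE₁ hA⟩

/-- **Corollary 2.4** (large deviations of the empirical measure). Uniformly over `x` in
compact subsets of `E \ E₀`, the family `P_x ∘ μ_T⁻¹` satisfies as `T → ∞` a large deviation
principle with convex rate function the Donsker-Varadhan functional `Î`. -/
theorem empirical_measure_ldp (S : ChainSetting E) (hiv : S.CondIV)
    (P : E → Measure (Traj E)) (hP : ∀ x, IsChainLaw S.r S.skel x (P x)) :
    (∀ (μ₁ μ₂ : Measure E) (a b : ℝ≥0∞), a + b = 1 →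
      S.Ihat0 (a • μ₁ + b • μ₂) ≤ a * S.Ihat0 μ₁ + b * S.Ihat0 μ₂) ∧
    (∀ E₁ : Set E, IsCompact E₁ → E₁ ⊆ S.E0ᶜ →
      (∀ C : Set (ProbabilityMeasure E), IsClosed C →
        Filter.limsup (fun T : ℝ => ⨆ x ∈ E₁,
            ((1 / T : ℝ) : EReal) * ENNReal.log (P x {ω : Traj E | toPM (empMeas T ω) ∈ C}))
          atTop ≤ -(⨅ μ ∈ C, (S.Ihat0 (μ : Measure E) : EReal))) ∧
      (∀ A : Set (ProbabilityMeasure E), IsOpen A →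
        -(⨅ μ ∈ A, (S.Ihat0 (μ : Measure E) : EReal))
          ≤ Filter.liminf (fun T : ℝ => ⨅ x ∈ E₁,
              ((1 / T : ℝ) : EReal) * ENNReal.log (P x {ω : Traj E | toPM (empMeas T ω) ∈ A}))
            atTop)) := by
  obtain ⟨hconv, hupper, hlower⟩ := empirical_measure_ldp_general S P hP
  exact ⟨hconv, fun E₁ hcomp hE₁ => ⟨hupper E₁ hE₁, hlower E₁ hcomp hE₁⟩⟩

end
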